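/- arXiv:math/9207210 — 2 statements merged into one kernel-verified Lean document; each statement's English description precedes it below -/
import Mathlib

section
/- Let k be an algebraically closed field of characteristic p, where p is an odd prime, let t > 2 be an integer not divisible by p, let n = p + t, let a be a nonzero element of k, and let s be a positive integer. Then the polynomial f = Y^n - a·X^s·Y^t + 1 over the rational function field k(X) has n distinct roots in a splitting field, and the image of its Galois group in the group of permutations of this set of roots is exactly the alternating group on those n roots. -/
open Polynomial

open scoped Classical

theorem aux_sylow_conj {H : Type*} [Group H] [Finite H] (p : ℕ) (hp : p.Prime)
    (h2 : ¬ p ^ 2 ∣ Nat.card H) (x y : H) (hx : orderOf x = p) (hy : orderOf y = p) :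
    ∃ u : H, u * y * u⁻¹ ∈ Subgroup.zpowers x := by
  have : Fact p.Prime := ⟨hp⟩
  have h1 : p ∣ Nat.card H := hx ▸ orderOf_dvd_natCard x
  have hfac : (Nat.card H).factorization p = 1 := by
    have hne : Nat.card H ≠ 0 := Nat.card_pos.ne'
    apply le_antisymm
    · by_contra hlt
      exact h2 ((hp.pow_dvd_iff_le_factorization hne).2 (by omega))
    · exact (hp.dvd_iff_one_le_factorization hne).1 h1
  let P : Sylow p H := Sylow.ofCard (Subgroup.zpowers x) (by rw [hfac, Nat.card_zpowers, hx, pow_one])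
  let Q : Sylow p H := Sylow.ofCard (Subgroup.zpowers y) (by rw [hfac, Nat.card_zpowers, hy, pow_one])
  obtain ⟨u, hu⟩ := MulAction.exists_smul_eq H Q P
  refine ⟨u, ?_⟩
  have h3 : (P : Subgroup H) = Subgroup.zpowers x := rfl
  have h4 : (Q : Subgroup H) = Subgroup.zpowers y := rfl
  rw [← h3, ← hu, Sylow.coe_subgroup_smul, h4]
  rw [Subgroup.mem_pointwise_smul_iff_inv_smul_mem]
  have : ((MulAut.conj u)⁻¹ • (u * y * u⁻¹)) = y := by
    simp [MulAut.smul_def, ← map_inv]; try group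
  rw [this]
  exact Subgroup.mem_zpowers y

open Equiv Equiv.Perm in
theorem aux_jordan {α : Type*} [Fintype α] [DecidableEq α] (G : Subgroup (Equiv.Perm α))
    (hG : MulAction.IsPreprimitive G α) (p : ℕ) (hp : p.Prime) (g : Equiv.Perm α) (hg : g ∈ G)
    (hgc : g.IsCycle) (hgp : g.support.card = p) (hcard : p + 3 ≤ Fintype.card α) :
    alternatingGroup α ≤ G := by
  have hord : orderOf g = p := by rw [hgc.orderOf, hgp]
  -- multiple transitivity
  obtain ⟨m, hm⟩ := Nat.exists_eq_add_of_le hcard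
  have hsc : Set.ncard ((g.support)ᶜ : Set α) = (m + 2) + 1 := by
    apply Nat.add_left_cancel
    rw [Set.ncard_add_ncard_compl, Set.ncard_coe_finset, hgp, Nat.card_eq_fintype_card, hm]
    ring
  have hmt : MulAction.IsMultiplyPreprimitive G α (m + 2 + 2) := by
    apply hG.isMultiplyPreprimitive hsc
    · rw [Nat.card_eq_fintype_card, hm]; have := hp.two_le; omega
    have := isPretransitive_of_isCycle_mem hgc hg
    apply MulAction.IsPreprimitive.of_prime_card
    convert! hp
    rw [Nat.card_eq_fintype_card, Fintype.card_subtype, ← hgp]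
    congr 1
    ext x
    simp [SubMulAction.mem_ofFixingSubgroup_iff]
  have hmt' : MulAction.IsMultiplyPretransitive G α (m + 2 + 2) := hmt.isMultiplyPretransitive
  have hmt2 : MulAction.IsMultiplyPretransitive G α (m + 2 + 1) :=
    MulAction.isMultiplyPretransitive_of_le (n := m + 2 + 2) (by omega)
      (by rw [Nat.card_eq_fintype_card, hm]; have := hp.two_le; omega)
  have hcardc : Fintype.card {x // x ∉ g.support} = m + 2 + 1 := by
    rw [← hsc, ← Nat.card_eq_fintype_card]; rfl
  have key1 : ∀ τ : Perm α, ∃ h ∈ G, ∀ x ∉ g.support, h x = τ x := by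
    intro τ
    let e := (Fintype.equivFinOfCardEq hcardc).symm
    let i1 : Fin (m + 2 + 1) ↪ α := e.toEmbedding.trans (Function.Embedding.subtype _)
    let i2 : Fin (m + 2 + 1) ↪ α := i1.trans τ.toEmbedding
    obtain ⟨h, hh⟩ := MulAction.exists_smul_eq G i1 i2
    refine ⟨h, h.2, fun x hx => ?_⟩
    have := DFunLike.congr_fun hh (e.symm ⟨x, hx⟩)
    simpa [i1, i2, e] using! this
  -- normalizing
  have key2 : ∀ τ : Perm α, (∀ x, x ∉ g.support → τ x ∉ g.support) →
      (∀ x, x ∉ g.support → τ⁻¹ x ∉ g.support) →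
      ∃ h ∈ G, (∀ x ∉ g.support, h x = τ x) ∧ h * g * h⁻¹ ∈ Subgroup.zpowers g := by
    intro τ hτ hτi
    obtain ⟨h, hh, hhτ⟩ := key1 τ
    let F : Subgroup (Perm α) := (ofSubtype : Perm {x // x ∈ g.support} →* Perm α).range
    have hFmem : ∀ u : Perm α, u ∈ F ↔ ∀ x, x ∉ g.support → u x = x := by
      intro u
      constructor
      · rintro ⟨v, rfl⟩ x hx
        exact ofSubtype_apply_of_not_mem v hx
      · intro hu
        have h2 : ∀ x, u x ≠ x → x ∈ g.support := fun x hx => by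
          by_contra h; exact hx (hu x h)
        have h1 : ∀ x, u x ∈ g.support ↔ x ∈ g.support := by
          intro x
          by_cases hx : u x = x
          · rw [hx]
          · exact ⟨fun _ => h2 x hx, fun _ => h2 _ (fun h => hx (u.injective h))⟩
        exact ⟨subtypePerm u h1, ofSubtype_subtypePerm h1 h2⟩
    have hFc : Nat.card F = p.factorial := by
      rw [← Nat.card_congr (MonoidHom.ofInjective ofSubtype_injective).toEquiv, Nat.card_perm,
        Nat.card_eq_fintype_card, Fintype.card_coe, hgp]
    let H : Subgroup (Perm α) := G ⊓ F
    have hHc : Nat.card H ∣ p.factorial := hFc ▸ Subgroup.card_dvd_of_le inf_le_right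
    have hgF : g ∈ F := (hFmem g).2 fun x hx => by simpa using hx
    have hinv : ∀ x, x ∉ g.support → h⁻¹ x ∉ g.support := by
      intro x hx
      have h0 := hhτ _ (hτi x hx)
      rw [← Perm.mul_apply τ, mul_inv_cancel, Perm.one_apply] at h0
      rw [Perm.inv_eq_iff_eq.2 h0.symm]
      exact hτi x hx
    have hgF' : h * g * h⁻¹ ∈ F := (hFmem _).2 fun x hx => by
      have := hinv x hx
      simp only [Perm.mul_apply]
      rw [notMem_support.1 this]; simp
    obtain ⟨u, hu⟩ := aux_sylow_conj (H := H) p hp (fun hd => by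
        have h3 : p ^ 2 ∣ p.factorial := hd.trans hHc
        rw [show p = (p - 1) + 1 by have := hp.pos; omega, Nat.factorial_succ,
          show (p - 1) + 1 = p by have := hp.pos; omega, sq] at h3
        have h4 := Nat.dvd_of_mul_dvd_mul_left hp.pos h3
        have := (hp.dvd_factorial).1 h4
        have := hp.pos; omega)
      ⟨g, Subgroup.mem_inf.2 ⟨hg, hgF⟩⟩ ⟨h * g * h⁻¹, Subgroup.mem_inf.2
        ⟨G.mul_mem (G.mul_mem hh hg) (G.inv_mem hh), hgF'⟩⟩
      (by rw [Subgroup.orderOf_mk, hord])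
      (by rw [Subgroup.orderOf_mk, ← hord]; exact (MulAut.conj h).orderOf_eq g)
    refine ⟨u * h, G.mul_mem u.2.1 hh, fun x hx => ?_, ?_⟩
    · rw [Perm.mul_apply, (hFmem u).1 u.2.2 _ (by rw [hhτ x hx]; exact hτ x hx), hhτ x hx]
    · obtain ⟨j, hj⟩ := hu
      refine ⟨j, ?_⟩
      have := congrArg (fun z : H => (z : Perm α)) hj
      simp only [Subgroup.coe_zpow, Subgroup.coe_mul, Subgroup.coe_inv] at this
      show g ^ j = _
      rw [this]; group
  -- three points
  have h3 : 2 < Fintype.card {x // x ∉ g.support} := by omega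
  obtain ⟨x, y, z, hxy, hxz, hyz⟩ := Fintype.two_lt_card_iff.1 h3
  have hsw : ∀ a b : {x // x ∉ g.support}, ∀ x, x ∉ g.support → swap (a : α) b x ∉ g.support := by
    intro a b x hx
    rw [swap_apply_def]; split_ifs
    · exact b.2
    · exact a.2
    · exact hx
  obtain ⟨h1, h1G, h1τ, j1, hj1⟩ := key2 (swap (x : α) y) (hsw x y)
    (by rw [swap_inv]; exact hsw x y)
  obtain ⟨h2, h2G, h2τ, j2, hj2⟩ := key2 (swap (y : α) z) (hsw y z)
    (by rw [swap_inv]; exact hsw y z)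
  have hj1' : ∀ i : ℤ, h1 * g ^ i * h1⁻¹ = g ^ (j1 * i) := fun i => by
    rw [← conj_zpow, ← hj1]; exact (zpow_mul _ _ _).symm
  have hj2' : ∀ i : ℤ, h2 * g ^ i * h2⁻¹ = g ^ (j2 * i) := fun i => by
    rw [← conj_zpow, ← hj2]; exact (zpow_mul _ _ _).symm
  have hcomm : (h1 * h2) * g * (h1 * h2)⁻¹ = (h2 * h1) * g * (h2 * h1)⁻¹ := by
    have e1 : (h1 * h2) * g * (h1 * h2)⁻¹ = h1 * (h2 * g ^ (1:ℤ) * h2⁻¹) * h1⁻¹ := by group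
    have e2 : (h2 * h1) * g * (h2 * h1)⁻¹ = h2 * (h1 * g ^ (1:ℤ) * h1⁻¹) * h2⁻¹ := by group
    rw [e1, e2, hj1', hj2', hj1', hj2']; congr 1; ring
  let c := (h2 * h1)⁻¹ * (h1 * h2)
  have hcg : c * g = g * c := by
    have := congrArg (fun w => (h2 * h1)⁻¹ * w * (h1 * h2)) hcomm
    simp only [c]
    calc _ = (h2 * h1)⁻¹ * ((h1 * h2) * g * (h1 * h2)⁻¹) * (h1 * h2) := by group
      _ = _ := this
      _ = _ := by group
  let τ : Perm α := (swap (y : α) z * swap (x : α) y)⁻¹ * (swap (x : α) y * swap (y : α) z)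
  have hcτ : ∀ w, w ∉ g.support → c w = τ w := by
    intro w hw
    have e1 : (h1 * h2) w = (swap (x : α) y * swap (y : α) z) w := by
      rw [Perm.mul_apply, h2τ w hw, h1τ _ (hsw y z w hw)]; rfl
    simp only [c, τ, Perm.mul_apply (_⁻¹)]
    rw [Perm.inv_eq_iff_eq, e1]
    set v := (swap (y : α) z * swap (x : α) y)⁻¹ ((swap (x : α) y * swap (y : α) z) w) with hv
    have hvs : v ∉ g.support := by
      rw [hv]; simp only [mul_inv_rev, swap_inv, Perm.mul_apply]
      exact hsw _ _ _ (hsw _ _ _ (hsw _ _ _ (hsw _ _ _ hw)))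
    rw [Perm.mul_apply h2, h1τ v hvs, h2τ _ (hsw _ _ _ hvs)]
    rw [Perm.eq_inv_iff_eq] at hv
    exact hv.symm
  obtain ⟨b, hb, hbc⟩ := id hgc
  have hcb : g (c b) ≠ c b := by
    intro h
    rw [← Perm.mul_apply, ← hcg, Perm.mul_apply] at h
    exact hb (c.injective h)
  obtain ⟨i, hi⟩ := hbc hcb
  have hfin : c * (g ^ i)⁻¹ = τ := by
    have hcomm' : ∀ j : ℤ, c * g ^ j = g ^ j * c := fun j =>
      (Commute.zpow_right (show Commute c g from hcg) j)
    ext w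
    by_cases hw : w ∈ g.support
    · have hτw : τ w = w := by
        have hne : ∀ a : {x // x ∉ g.support}, w ≠ a := fun a h => a.2 (h ▸ hw)
        simp only [τ, mul_inv_rev, swap_inv, Perm.mul_apply]
        simp [swap_apply_of_ne_of_ne, hne]
      rw [hτw]
      obtain ⟨j, rfl⟩ := hbc (mem_support.1 hw)
      rw [← zpow_neg, Perm.mul_apply, ← Perm.mul_apply, ← Perm.mul_apply,
        mul_assoc, ← zpow_add, hcomm', Perm.mul_apply, ← hi, ← Perm.mul_apply, ← zpow_add]
      congr 2; ring
    · have : (g ^ i)⁻¹ w = w := by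
        rw [← zpow_neg]; exact zpow_apply_eq_self_of_apply_eq_self (notMem_support.1 hw) _
      rw [Perm.mul_apply, this, hcτ w hw]
  have hτG : τ ∈ G := by
    rw [← hfin]
    refine G.mul_mem (G.mul_mem (G.inv_mem (G.mul_mem h2G h1G)) (G.mul_mem h1G h2G))
      (G.inv_mem (G.zpow_mem hg i))
  refine alternatingGroup_le_of_isPreprimitive_of_isThreeCycle_mem hG (g := τ) ?_ hτG
  have hx' : (x : α) ≠ y := fun h => hxy (Subtype.ext h)
  have hy' : (y : α) ≠ z := fun h => hyz (Subtype.ext h)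
  have hz' : (x : α) ≠ z := fun h => hxz (Subtype.ext h)
  have h3c : (swap (x : α) y * swap (y : α) z).IsThreeCycle := by
    rw [swap_comm (x : α) y]
    exact isThreeCycle_swap_mul_swap_same hx'.symm hy' hz'
  have : τ = (swap (x : α) y * swap (y : α) z) * (swap (x : α) y * swap (y : α) z) := by
    simp only [τ, mul_inv_rev, swap_inv]
  rw [this]
  exact h3c.isThreeCycle_sq


theorem aux_disc {E : Type*} [Field E] (p t n : ℕ) [CharP E p] (hn : n = p + t) (hp : p.Prime)
    (ht : 0 < t) (T : E) (v : Fin n → E)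
    (hv : Lagrange.nodal Finset.univ v = X ^ n - C T * X ^ t + 1) :
    (Matrix.vandermonde v).det ^ 2 = (t : E) ^ n ∨ (Matrix.vandermonde v).det ^ 2 = -(t : E) ^ n := by
  have hn0 : (n : E) = t := by rw [hn]; simp
  have h1 : ∀ i, (∏ j ∈ ({i}ᶜ : Finset (Fin n)), (v i - v j)) * (0 - v i) = t := by
    intro i
    have h0 := Lagrange.eval_nodal_derivative_eval_node_eq (s := Finset.univ) (v := v) (Finset.mem_univ i)
    have hr : (Lagrange.nodal Finset.univ v).eval (v i) = 0 :=
      Lagrange.eval_nodal_at_node (Finset.mem_univ i)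
    rw [hv] at h0 hr
    rw [Lagrange.eval_nodal] at h0
    rw [Finset.compl_singleton, ← h0]
    simp [derivative_X_pow, hn0] at hr ⊢
    obtain ⟨m, rfl⟩ : ∃ m, t = m + 1 := ⟨t - 1, by omega⟩
    obtain rfl : n = (p + m) + 1 := by omega
    simp only [Nat.add_sub_cancel] at *
    push_cast at *
    have : v i ^ (p + m + 1) = T * v i ^ (m + 1) - 1 := by linear_combination hr
    rw [pow_succ] at this
    linear_combination (-(m:E) - 1) * this
  have h2 : ∏ i, (0 - v i) = 1 := by
    have := Lagrange.eval_nodal (s := Finset.univ) (v := v) (x := 0)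
    rw [← this, hv]
    have : n ≠ 0 := by omega
    have : t ≠ 0 := by omega
    simp [*]
  have h3 : ∏ i, ∏ j ∈ ({i}ᶜ : Finset (Fin n)), (v i - v j) = (t : E) ^ n := by
    have := Finset.prod_congr (rfl : (Finset.univ : Finset (Fin n)) = _) (fun i _ => h1 i)
    rw [Finset.prod_mul_distrib, h2, mul_one] at this
    simpa using this
  have h4 := Finset.prod_prod_Ioi_mul_eq_prod_prod_off_diag (fun j i : Fin n => v i - v j)
  have h5 : ∏ i : Fin n, ∏ j ∈ Finset.Ioi i, (v i - v j) * (v j - v i)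
      = (∏ i : Fin n, ∏ j ∈ Finset.Ioi i, (-1 : E)) * (Matrix.vandermonde v).det ^ 2 := by
    rw [Matrix.det_vandermonde, ← Finset.prod_pow, ← Finset.prod_mul_distrib]
    refine Finset.prod_congr rfl fun i _ => ?_
    rw [← Finset.prod_pow, ← Finset.prod_mul_distrib]
    refine Finset.prod_congr rfl fun j _ => ?_
    ring
  have h6 : (∏ i : Fin n, ∏ j ∈ Finset.Ioi i, (-1 : E)) = 1 ∨
      (∏ i : Fin n, ∏ j ∈ Finset.Ioi i, (-1 : E)) = -1 := by
    simp only [Finset.prod_const]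
    rw [Finset.prod_pow_eq_pow_sum]
    exact neg_one_pow_eq_or _ _
  rw [h5, h3] at h4
  rcases h6 with h6 | h6 <;> rw [h6] at h4
  · left; simpa using h4
  · right; rw [← h4]; ring

theorem aux_sign {k K E : Type*} [Field k] [IsAlgClosed k] [Field K] [Field E] [Algebra k K]
    [Algebra K E] [Algebra k E] [IsScalarTower k K E]
    (p t n : ℕ) [CharP E p] (hodd : Odd p) (hn : n = p + t) (hp : p.Prime)
    (ht : 0 < t) (T : E) (S : Set E) [Fintype S] (hS : Fintype.card S = n)
    (hv : ∏ y : S, (X - C (y : E)) = X ^ n - C T * X ^ t + 1)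
    (σ : E ≃ₐ[K] E) (π : Equiv.Perm S) (hπ : ∀ y : S, (π y : E) = σ y) :
    Equiv.Perm.sign π = 1 := by
  let e := (Fintype.equivFinOfCardEq hS).symm
  let v : Fin n → E := fun i => e i
  have hv' : Lagrange.nodal Finset.univ v = X ^ n - C T * X ^ t + 1 := by
    rw [← hv, Lagrange.nodal]
    exact Equiv.prod_comp e (fun y : S => (X - C (y : E)))
  have hinj : Function.Injective v := Subtype.val_injective.comp e.injective
  set δ := (Matrix.vandermonde v).det with hδ
  have hδ0 : δ ≠ 0 := Matrix.det_vandermonde_ne_zero_iff.2 hinj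
  have hd := aux_disc p t n hn hp ht T v hv'
  have hc : ∃ c : k, δ ^ 2 = algebraMap k E c := by
    rcases hd with h | h
    · exact ⟨(t : k) ^ n, by rw [h]; simp⟩
    · exact ⟨-(t : k) ^ n, by rw [h]; simp⟩
  obtain ⟨c, hc⟩ := hc
  obtain ⟨b, hb⟩ := IsAlgClosed.exists_pow_nat_eq c (n := 2) (by norm_num)
  have hδσ : σ δ = δ := by
    rw [← hb, map_pow] at hc
    have hbσ : σ (algebraMap k E b) = algebraMap k E b := by
      rw [IsScalarTower.algebraMap_apply k K E, AlgEquiv.commutes]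
    rcases sq_eq_sq_iff_eq_or_eq_neg.1 hc with h | h <;> rw [h] <;> simp [hbσ]
  let π' : Equiv.Perm (Fin n) := e.symm.permCongr π
  have hs : Equiv.Perm.sign π' = Equiv.Perm.sign π := Equiv.Perm.sign_permCongr _ _
  have h1 : σ δ = Equiv.Perm.sign π' * δ := by
    rw [hδ, ← Matrix.det_permute]
    rw [show σ (Matrix.vandermonde v).det = (σ : E →+* E) (Matrix.vandermonde v).det from rfl,
      RingHom.map_det]
    congr 1
    ext i j
    simp [Matrix.vandermonde_apply, v, π', hπ]
  rw [hδσ, hs] at h1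
  rcases Int.units_eq_one_or (Equiv.Perm.sign π) with h | h
  · exact h
  · exfalso
    rw [h] at h1
    simp at h1
    have h2 : (2 : E) ≠ 0 := by
      intro h2
      have : p ∣ 2 := (CharP.cast_eq_zero_iff E p 2).1 (by exact_mod_cast h2)
      have := (Nat.prime_dvd_prime_iff_eq hp Nat.prime_two).1 this
      subst this
      exact absurd hodd (by decide)
    have : 2 * δ = 0 := by linear_combination h1
    rcases mul_eq_zero.1 this with h | h
    · exact h2 h
    · exact hδ0 h


theorem aux_eis {R K : Type*} [CommRing R] [IsDomain R] [IsIntegrallyClosed R] [Field K] [Algebra R K]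
    [IsFractionRing R K] (P : Ideal R) (hP : P.IsPrime) (c : R) (hc : c ∈ P) (hc2 : c ∉ P ^ 2)
    (n : ℕ) (hn : 0 < n) : Irreducible (X ^ n - C (algebraMap R K c) : K[X]) := by
  have hm : (X ^ n - C c : R[X]).Monic := monic_X_pow_sub_C c hn.ne'
  have h1 : Irreducible (X ^ n - C c : R[X]) := by
    refine IsEisensteinAt.irreducible (𝓟 := P) ⟨?_, ?_, ?_⟩ hP hm.isPrimitive ?_
    · rw [hm.leadingCoeff]; exact fun h => hP.ne_top ((Ideal.eq_top_iff_one P).2 h)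
    · intro i hi
      rw [natDegree_X_pow_sub_C] at hi
      rw [coeff_sub, coeff_X_pow, if_neg hi.ne, coeff_C]
      split_ifs
      · simpa using hc
      · simp
    · rw [coeff_sub, coeff_X_pow, if_neg hn.ne, coeff_C_zero]; simpa using hc2
    · rwa [natDegree_X_pow_sub_C]
  have := (hm.irreducible_iff_irreducible_map_fraction_map (K := K)).1 h1
  simpa using this

theorem aux_hensel {k : Type*} [Field k] (g : (PowerSeries k)[X]) (hg : g.Monic) (a : k)
    (h1 : (g.map (PowerSeries.constantCoeff (R := k))).eval a = 0)
    (h2 : (derivative (g.map (PowerSeries.constantCoeff (R := k)))).eval a ≠ 0) :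
    ∃ w : PowerSeries k, g.eval w = 0 ∧ PowerSeries.constantCoeff (R := k) w = a := by
  have := IsAdicComplete.henselianRing (PowerSeries k) (Ideal.span {PowerSeries.X})
  have hcc : ∀ q : (PowerSeries k)[X], PowerSeries.constantCoeff (R := k) (q.eval (PowerSeries.C a))
      = (q.map (PowerSeries.constantCoeff (R := k))).eval a := by
    intro q
    have := Polynomial.eval_map_apply (PowerSeries.constantCoeff (R := k)) (p := q) (PowerSeries.C a)
    rw [← this]; simp
  have m1 : g.eval (PowerSeries.C a) ∈ Ideal.span {(PowerSeries.X : PowerSeries k)} := by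
    rw [Ideal.mem_span_singleton, PowerSeries.X_dvd_iff]
    exact (hcc g).trans h1
  have m2 : IsUnit ((derivative g).eval (PowerSeries.C a)) := by
    rw [PowerSeries.isUnit_iff_constantCoeff, hcc, ← derivative_map]
    exact isUnit_iff_ne_zero.2 h2
  obtain ⟨w, hw, hwa⟩ := HenselianRing.is_henselian (I := Ideal.span {(PowerSeries.X : PowerSeries k)})
    g hg (PowerSeries.C a) m1 (m2.map _)
  refine ⟨w, hw, ?_⟩
  rw [Ideal.mem_span_singleton, PowerSeries.X_dvd_iff, map_sub, sub_eq_zero] at hwa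
  simpa using hwa

theorem aux_rel {F : Type*} [Field F] (p t n : ℕ) [CharP F p] (hp : p.Prime) (hn : n = p + t)
    (ht : 0 < t) (T y z : F) (hy : y ^ n - T * y ^ t + 1 = 0)
    (hz : z ^ n - T * z ^ t + 1 = 0) (hyz : y ≠ z) :
    y ≠ 0 ∧ z ≠ 0 ∧ (z / y) ^ p - 1 ≠ 0 ∧
      ((z / y) ^ t * ((z / y) ^ p - 1)) * y ^ n = (z / y) ^ t - 1 := by
  have : Fact p.Prime := ⟨hp⟩
  have h0 : ∀ w : F, w ^ n - T * w ^ t + 1 = 0 → w ≠ 0 := by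
    rintro w hw rfl
    have : n ≠ 0 := by omega
    have : t ≠ 0 := by omega
    simp [*] at hw
  have hy0 := h0 y hy
  have hz0 := h0 z hz
  refine ⟨hy0, hz0, ?_, ?_⟩
  · have : (z / y) ^ p - 1 = (z / y - 1) ^ p := by rw [sub_pow_char]; simp
    rw [this]
    apply pow_ne_zero
    rw [sub_ne_zero]
    intro h
    rw [div_eq_one_iff_eq hy0] at h
    exact hyz h.symm
  · subst hn
    have e1 : y ^ t * (z ^ t * (z ^ p - y ^ p)) = z ^ t - y ^ t := by
      rw [pow_add] at hy hz
      linear_combination (y ^ t) * hz - z ^ t * hy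
    rw [div_pow, div_pow, pow_add]
    have h1 : y ^ t ≠ 0 := pow_ne_zero _ hy0
    have h2 : y ^ p ≠ 0 := pow_ne_zero _ hy0
    generalize y ^ t = A at *
    generalize y ^ p = B at *
    field_simp
    linear_combination e1

theorem aux_trans {k F : Type*} [Field k] [Field F] [Algebra k F] (p t n : ℕ) [CharP F p]
    (hp : p.Prime) (hn : n = p + t)
    (ht : 0 < t) (T y z : F) (hy : y ^ n - T * y ^ t + 1 = 0)
    (hz : z ^ n - T * z ^ t + 1 = 0) (hyz : y ≠ z) (hT : Transcendental k T) :
    Transcendental k (z / y) := by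
  obtain ⟨hy0, hz0, hU, hrel⟩ := aux_rel p t n hp hn ht T y z hy hz hyz
  intro hal
  apply hT
  have hu0 : (z / y) ^ t * ((z / y) ^ p - 1) ≠ 0 :=
    mul_ne_zero (pow_ne_zero _ (div_ne_zero hz0 hy0)) hU
  have e1 : y ^ n = ((z / y) ^ t - 1) * ((z / y) ^ t * ((z / y) ^ p - 1))⁻¹ := by
    rw [← hrel]; field_simp
  have a1 : IsAlgebraic k (1 : F) := isAlgebraic_one
  have a2 : IsAlgebraic k (y ^ n) := by
    rw [e1]
    exact ((hal.pow t).sub a1).mul (((hal.pow t).mul ((hal.pow p).sub a1)).inv)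
  have a3 : IsAlgebraic k y := a2.of_pow (by have := hp.pos; omega)
  have e2 : T = (y ^ n + 1) * (y ^ t)⁻¹ := by
    field_simp; linear_combination -hy
  rw [e2]
  exact (a2.add a1).mul (a3.pow t).inv

theorem aux_N.{u} (k : Type u) [Field k] [IsAlgClosed k] (p t n : ℕ) [CharP k p] (hp : p.Prime)
    (ht : 1 < t) (hpt : ¬ p ∣ t) (hn : n = p + t) :
    ∃ (N : Type u) (_ : Field N) (_ : Algebra k N) (yN zN : N),
      ∀ (F : Type u) [Field F] [Algebra k F] (T y z : F), y ^ n - T * y ^ t + 1 = 0 →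
        z ^ n - T * z ^ t + 1 = 0 → y ≠ z → Transcendental k T →
        ∃ φ : N →ₐ[k] F, φ yN = y ∧ φ zN = z := by
  have hpF : Fact p.Prime := ⟨hp⟩
  have htk : (t : k) ≠ 0 := fun h => hpt ((CharP.cast_eq_zero_iff k p t).1 h)
  obtain ⟨ζ, hζ, hζ1⟩ : ∃ ζ : k, ζ ^ t = 1 ∧ ζ ≠ 1 := by
    have : NeZero (t : k) := ⟨htk⟩
    obtain ⟨ζ, hζ⟩ := HasEnoughRootsOfUnity.exists_primitiveRoot k t
    exact ⟨ζ, hζ.pow_eq_one, hζ.ne_one ht⟩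
  have hζ0 : ζ ≠ 0 := by rintro rfl; rw [zero_pow (by omega)] at hζ; exact zero_ne_one hζ
  let D : k[X] := X ^ t * (X ^ p - 1)
  let c : k[X] := (X ^ t - 1) * D ^ (n - 1)
  have hDζ : D.eval ζ ≠ 0 := by
    simp only [D, eval_mul, eval_pow, eval_X, eval_sub, eval_one]
    refine mul_ne_zero (pow_ne_zero _ hζ0) ?_
    have : ζ ^ p - 1 = (ζ - 1) ^ p := by rw [sub_pow_char]; simp
    rw [this]
    exact pow_ne_zero _ (sub_ne_zero.2 hζ1)
  have hirr : Irreducible (X ^ n - C (algebraMap k[X] (RatFunc k) c) : (RatFunc k)[X]) := by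
    refine aux_eis (Ideal.span {X - C ζ}) ?_ c ?_ ?_ n (by omega)
    · exact (Ideal.span_singleton_prime (X_sub_C_ne_zero ζ)).2 (prime_X_sub_C ζ)
    · rw [Ideal.mem_span_singleton, dvd_iff_isRoot]
      simp [c, hζ]
    · rw [Ideal.span_singleton_pow, Ideal.mem_span_singleton]
      rintro ⟨w, hw⟩
      have := congrArg (fun q => (derivative q).eval ζ) hw
      simp [c, derivative_mul, derivative_pow, hζ] at this
      have hD' : D.eval ζ ^ (n - 1) ≠ 0 := pow_ne_zero _ hDζ
      simp [htk, hζ0, hD', hDζ] at this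
  set g : (RatFunc k)[X] := X ^ n - C (algebraMap k[X] (RatFunc k) c) with hg
  have hF : Fact (Irreducible g) := ⟨hirr⟩
  let uN : AdjoinRoot g := AdjoinRoot.of g (algebraMap k[X] (RatFunc k) X)
  let yN : AdjoinRoot g := AdjoinRoot.root g / (uN ^ t * (uN ^ p - 1))
  refine ⟨AdjoinRoot g, inferInstance, inferInstance, yN, uN * yN, ?_⟩
  intro F _ _ T y z hy hz hyz hT
  have : CharP F p := charP_of_injective_algebraMap (algebraMap k F).injective p
  obtain ⟨hy0, hz0, hU, hrel⟩ := aux_rel p t n hp hn (by omega) T y z hy hz hyz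
  have htr := aux_trans (k := k) p t n hp hn (by omega) T y z hy hz hyz hT
  let U := z / y
  let i : RatFunc k →ₐ[k] F := IsFractionRing.liftAlgHom (transcendental_iff_injective.1 htr)
  have hi : ∀ q : k[X], i (algebraMap k[X] (RatFunc k) q) = aeval U q := by
    intro q
    simp only [i, IsFractionRing.liftAlgHom_apply, IsFractionRing.lift_algebraMap]; rfl
  have hev : eval₂ (i : RatFunc k →+* F) ((U ^ t * (U ^ p - 1)) * y) g = 0 := by
    rw [hg, eval₂_sub, eval₂_X_pow, eval₂_C]
    have := hi c
    rw [show (i : RatFunc k →+* F) (algebraMap k[X] (RatFunc k) c) = i (algebraMap k[X] (RatFunc k) c)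
      from rfl, this]
    simp only [c, D, map_mul, map_sub, map_pow, aeval_X, map_one]
    rw [← hrel]
    obtain ⟨m, rfl⟩ : ∃ m, n = m + 1 := ⟨n - 1, by have := hp.pos; omega⟩
    simp only [Nat.add_sub_cancel]
    simp only [U]
    generalize (z / y) ^ t * ((z / y) ^ p - 1) = D0
    rw [mul_pow]; ring
  have hu0 : U ^ t * (U ^ p - 1) ≠ 0 :=
    mul_ne_zero (pow_ne_zero _ (div_ne_zero hz0 hy0)) hU
  let φ : AdjoinRoot g →ₐ[k] F := AdjoinRoot.liftAlgHom g i _ hev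
  have hφu : φ uN = U := by
    have := hi X
    rw [aeval_X] at this
    rw [← this]
    simp [φ, uN]
  have hφr : φ (AdjoinRoot.root g) = (U ^ t * (U ^ p - 1)) * y := by
    simp [φ]
  have hφy : φ yN = y := by
    simp only [yN, map_div₀, map_mul, map_pow, map_sub, map_one, hφu, hφr]
    exact mul_div_cancel_left₀ _ hu0
  refine ⟨φ, hφy, ?_⟩
  rw [map_mul, hφu, hφy]
  simp only [U]; field_simp


theorem aux_psroot {k : Type*} [Field k] (t n : ℕ) (hn0 : (n : k) ≠ 0) (htn : t < n) (ht : 0 < t) (ζ : k)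
    (hζ : ζ ^ n = -1) : ∃ w : PowerSeries k, w ^ n - PowerSeries.X * w ^ t + 1 = 0 ∧
      PowerSeries.constantCoeff (R := k) w = ζ := by
  have hm : (X ^ n - C (PowerSeries.X : PowerSeries k) * X ^ t + 1 : (PowerSeries k)[X]).Monic := by
    have : (X ^ n - C (PowerSeries.X : PowerSeries k) * X ^ t + 1 : (PowerSeries k)[X]) =
      X ^ n + (C (-PowerSeries.X : PowerSeries k) * X ^ t + 1) := by rw [C_neg]; ring
    rw [this]
    apply monic_X_pow_add
    refine lt_of_le_of_lt (degree_add_le _ _) (max_lt ?_ ?_)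
    · exact lt_of_le_of_lt (degree_C_mul_X_pow_le _ _) (by exact_mod_cast htn)
    · exact lt_of_le_of_lt degree_one_le (by exact_mod_cast (by omega : 0 < n))
  have hmap : (X ^ n - C (PowerSeries.X : PowerSeries k) * X ^ t + 1 : (PowerSeries k)[X]).map
      (PowerSeries.constantCoeff (R := k)) = X ^ n + 1 := by
    simp
  have hζ0 : ζ ≠ 0 := by
    rintro rfl
    rw [zero_pow (by omega)] at hζ
    simp at hζ
  obtain ⟨w, hw, hc⟩ := aux_hensel _ hm ζ (by rw [hmap]; simp [hζ]) (by
    rw [hmap]; simp [derivative_X_pow, hn0, hζ0])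
  exact ⟨w, by simpa using hw, hc⟩

theorem aux_N2.{u} (k : Type u) [Field k] [IsAlgClosed k] (p t n : ℕ) [CharP k p] (hp : p.Prime)
    (ht : 1 < t) (hpt : ¬ p ∣ t) (hn : n = p + t) (a : k) (ha : a ≠ 0) (s : ℕ) (hs : 0 < s) :
    ∃ (N : Type u) (_ : Field N) (_ : Algebra k N) (yN zN xN : N),
      ∀ (F : Type u) [Field F] [Algebra k F] (x y z : F),
        y ^ n - (algebraMap k F a * x ^ s) * y ^ t + 1 = 0 →
        z ^ n - (algebraMap k F a * x ^ s) * z ^ t + 1 = 0 → y ≠ z → Transcendental k x →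
        ∃ φ : N →ₐ[k] F, φ yN = y ∧ φ zN = z ∧ φ xN = x := by
  have hpF : Fact p.Prime := ⟨hp⟩
  have hnk : (n : k) ≠ 0 := fun h => hpt (by
    have := (CharP.cast_eq_zero_iff k p n).1 h
    rw [hn] at this
    exact (Nat.dvd_add_right (dvd_refl p)).1 this)
  have hnpos : 0 < n := by omega
  obtain ⟨ζ, hζ⟩ := IsAlgClosed.exists_pow_nat_eq (-1 : k) hnpos
  obtain ⟨ω, hω, hω1⟩ : ∃ ζ : k, ζ ^ n = 1 ∧ ζ ≠ 1 := by
    have : NeZero (n : k) := ⟨hnk⟩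
    obtain ⟨ζ, hζ⟩ := HasEnoughRootsOfUnity.exists_primitiveRoot k n
    exact ⟨ζ, hζ.pow_eq_one, hζ.ne_one (by omega)⟩
  have hζ0 : ζ ≠ 0 := by
    rintro rfl
    rw [zero_pow (by omega)] at hζ
    simp at hζ
  have htn : t < n := by have := hp.pos; omega
  obtain ⟨w1, hw1, hc1⟩ := aux_psroot t n hnk htn (by omega) ζ hζ
  obtain ⟨w2, hw2, hc2⟩ := aux_psroot t n hnk htn (by omega) (ζ * ω) (by rw [mul_pow, hζ, hω, mul_one])
  have hw12 : w1 ≠ w2 := by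
    rintro rfl
    rw [hc1] at hc2
    apply hω1
    exact mul_left_cancel₀ hζ0 (by rw [← hc2, mul_one])
  obtain ⟨N, iF, iA, yN, zN, hN⟩ := aux_N k p t n hp ht hpt hn
  let M := FractionRing (PowerSeries k)
  let j := algebraMap (PowerSeries k) M
  have hj : Function.Injective j := IsFractionRing.injective _ _
  have hXtr : Transcendental k (PowerSeries.X : PowerSeries k) := by
    rw [transcendental_iff]
    intro q hq
    have : aeval (PowerSeries.X : PowerSeries k) q = (q : PowerSeries k) := by
      have h := aeval_algHom_apply (Polynomial.coeToPowerSeries.algHom (R := k) k) X q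
      simpa [Polynomial.coeToPowerSeries.algHom_apply] using h
    rw [this] at hq
    exact_mod_cast hq
  have hjtr : Transcendental k (j PowerSeries.X) := by
    exact (transcendental_algebraMap_iff hj).2 hXtr
  obtain ⟨φ0, hφy, hφz⟩ := hN M (j PowerSeries.X) (j w1) (j w2)
    (by rw [← map_pow, ← map_pow, ← map_mul, ← map_sub, ← map_one j, ← map_add, hw1, map_zero])
    (by rw [← map_pow, ← map_pow, ← map_mul, ← map_sub, ← map_one j, ← map_add, hw2, map_zero])
    (hj.ne hw12) hjtr
  have hTN : ∀ (F : Type u) [Field F] [Algebra k F] (φ : N →ₐ[k] F) (T : F),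
      (φ yN) ^ n - T * (φ yN) ^ t + 1 = 0 → φ ((yN ^ n + 1) / yN ^ t) = T := by
    intro F _ _ φ T h
    have h0 : φ yN ≠ 0 := by
      intro h0
      rw [h0, zero_pow (by omega), zero_pow (by omega)] at h
      simp at h
    simp only [map_div₀, map_add, map_pow, map_one]
    rw [div_eq_iff (pow_ne_zero _ h0)]
    linear_combination h
  set TN := (yN ^ n + 1) / yN ^ t with hTNd
  let h : N[X] := X ^ s - C (TN * algebraMap k N a⁻¹)
  have hirr : Irreducible h := by
    refine Monic.irreducible_of_irreducible_map (φ0 : N →+* M) _ (monic_X_pow_sub_C _ hs.ne') ?_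
    have e : h.map (φ0 : N →+* M) = X ^ s - C (j (PowerSeries.X * PowerSeries.C a⁻¹)) := by
      simp only [h, Polynomial.map_sub, Polynomial.map_pow, map_X, map_C]
      congr 2
      have := hTN M φ0 (j PowerSeries.X) (by
        rw [hφy, ← map_pow, ← map_pow, ← map_mul, ← map_sub, ← map_one j, ← map_add, hw1, map_zero])
      rw [RingHom.coe_coe, map_mul, this, map_mul, AlgHom.commutes]
      rfl
    rw [e]
    refine aux_eis (Ideal.span {PowerSeries.X}) ?_ _ ?_ ?_ s hs
    · exact (Ideal.span_singleton_prime PowerSeries.X_ne_zero).2 PowerSeries.X_prime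
    · exact Ideal.mul_mem_right _ _ (Ideal.mem_span_singleton_self _)
    · rw [Ideal.span_singleton_pow, Ideal.mem_span_singleton]
      rintro ⟨w, hw⟩
      rw [pow_two, mul_assoc] at hw
      have := mul_left_cancel₀ PowerSeries.X_ne_zero hw
      have := congrArg (PowerSeries.constantCoeff (R := k)) this
      simp [ha] at this
  have hF : Fact (Irreducible h) := ⟨hirr⟩
  refine ⟨AdjoinRoot h, inferInstance, inferInstance, AdjoinRoot.of h yN, AdjoinRoot.of h zN,
    AdjoinRoot.root h, ?_⟩
  intro F _ _ x y z hy hz hyz hx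
  have haF : algebraMap k F a ≠ 0 := by simpa using ha
  have hT : Transcendental k (algebraMap k F a * x ^ s) := by
    intro hal
    apply hx
    refine IsAlgebraic.of_pow hs (r := x) ?_
    have := hal.mul (isAlgebraic_algebraMap (A := F) a⁻¹)
    rw [map_inv₀, mul_right_comm, mul_inv_cancel₀ haF, one_mul] at this
    exact this
  obtain ⟨φ, h1, h2⟩ := hN F _ y z hy hz hyz hT
  have hev : eval₂ (φ : N →+* F) x h = 0 := by
    simp only [h, eval₂_sub, eval₂_X_pow, eval₂_C]
    rw [RingHom.coe_coe, map_mul, hTN F φ (algebraMap k F a * x ^ s) (by rw [h1]; exact hy),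
      AlgHom.commutes, map_inv₀]
    field_simp; simp
  refine ⟨AdjoinRoot.liftAlgHom h φ x hev, ?_, ?_, ?_⟩
  · simp [h1]
  · simp [h2]
  · simp

theorem aux_two.{u} (k : Type u) [Field k] [IsAlgClosed k] (p t n : ℕ) [CharP k p] (hp : p.Prime)
    (ht : 1 < t) (hpt : ¬ p ∣ t) (hn : n = p + t) (a : k) (ha : a ≠ 0) (s : ℕ) (hs : 0 < s)
    (E : Type u) [Field E] [Algebra (RatFunc k) E] [Normal (RatFunc k) E] (y z y' z' T : E)
    (hT : T = algebraMap (RatFunc k) E (algebraMap k (RatFunc k) a * RatFunc.X ^ s))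
    (hy : y ^ n - T * y ^ t + 1 = 0) (hz : z ^ n - T * z ^ t + 1 = 0) (hyz : y ≠ z)
    (hy' : y' ^ n - T * y' ^ t + 1 = 0) (hz' : z' ^ n - T * z' ^ t + 1 = 0) (hyz' : y' ≠ z') :
    ∃ σ : E ≃ₐ[RatFunc k] E, σ y = y' ∧ σ z = z' := by
  obtain ⟨N, iF, iA, yN, zN, xN, hN⟩ := aux_N2 k p t n hp ht hpt hn a ha s hs
  let _ : Algebra k E := ((algebraMap (RatFunc k) E).comp (algebraMap k (RatFunc k))).toAlgebra
  have : IsScalarTower k (RatFunc k) E := IsScalarTower.of_algebraMap_eq (fun _ => rfl)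
  have hX : Transcendental k (RatFunc.X : RatFunc k) := by
    rw [← RatFunc.algebraMap_X]
    exact (transcendental_algebraMap_iff (IsFractionRing.injective _ _)).2 (transcendental_X k)
  let x : E := algebraMap (RatFunc k) E RatFunc.X
  have hx : Transcendental k x := (transcendental_algebraMap_iff (algebraMap (RatFunc k) E).injective).2 hX
  have hT2 : T = algebraMap k E a * x ^ s := by
    rw [hT, map_mul, map_pow]; rfl
  rw [hT2] at hy hz hy' hz'
  obtain ⟨ψ, h1, h2, h3⟩ := hN E x y z hy hz hyz hx
  obtain ⟨ψ', h1', h2', h3'⟩ := hN E x y' z' hy' hz' hyz' hx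
  have hxN : Transcendental k xN := by
    intro h
    apply hx
    rw [← h3]; exact h.algHom ψ
  let i : RatFunc k →ₐ[k] N := IsFractionRing.liftAlgHom (transcendental_iff_injective.1 hxN)
  have hiX : i RatFunc.X = xN := by
    rw [← RatFunc.algebraMap_X]
    simp only [i, IsFractionRing.liftAlgHom_apply, IsFractionRing.lift_algebraMap]
    simp
  let _ : Algebra (RatFunc k) N := i.toRingHom.toAlgebra
  have key : ∀ ψ : N →ₐ[k] E, ψ xN = x → ∀ r, ψ (algebraMap (RatFunc k) N r) = algebraMap (RatFunc k) E r := by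
    intro ψ hψ r
    have : (ψ.comp i) = IsScalarTower.toAlgHom k (RatFunc k) E := by
      apply IsLocalization.algHom_ext (nonZeroDivisors k[X])
      ext
      change ψ (i (algebraMap k[X] (RatFunc k) X)) =
        algebraMap (RatFunc k) E (algebraMap k[X] (RatFunc k) X)
      rw [RatFunc.algebraMap_X, hiX, hψ]
    exact DFunLike.congr_fun this r
  let Ψ : N →ₐ[RatFunc k] E := { ψ.toRingHom with commutes' := key ψ h3 }
  let Ψ' : N →ₐ[RatFunc k] E := { ψ'.toRingHom with commutes' := key ψ' h3' }
  let _ : Algebra N E := Ψ.toRingHom.toAlgebra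
  have : IsScalarTower (RatFunc k) N E := IsScalarTower.of_algebraMap_eq (fun r => (Ψ.commutes r).symm)
  let χ : E →ₐ[RatFunc k] E := AlgHom.liftNormal Ψ' E
  have hc : ∀ w : N, χ (Ψ w) = Ψ' w := AlgHom.liftNormal_commutes Ψ' E
  refine ⟨AlgEquiv.ofBijective χ (AlgHom.normal_bijective _ E E χ), ?_, ?_⟩
  · have := hc yN
    simpa [Ψ, Ψ', h1, h1'] using this
  · have := hc zN
    simpa [Ψ, Ψ', h2, h2'] using this


theorem aux_norm {k : Type*} [Field k] (p t n N0 d : ℕ) (hp : p.Prime) (hn : n = p + t) (ht : 0 < t)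
    (hN : ¬ p ∣ N0) (g : (PowerSeries k)[X]) (hg : g.Monic)
    (hdvd : g ∣ X ^ n - X ^ p + C (PowerSeries.X ^ N0))
    (hred : g.map (PowerSeries.constantCoeff (R := k)) = X ^ d) : p ∣ d := by
  have hd : g.natDegree = d := by
    rw [← hg.natDegree_map (PowerSeries.constantCoeff (R := k)), hred, natDegree_X_pow]
  let R := PowerSeries k
  let B := AdjoinRoot g
  let pb := AdjoinRoot.powerBasis' hg
  have hfree : Module.Free R B := Module.Free.of_basis pb.basis
  have hfin : Module.Finite R B := pb.finite
  have hrank : Module.finrank R B = d := by rw [pb.finrank]; exact hd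
  let W : B := AdjoinRoot.root g
  have hW : W ^ p * (1 - W ^ t) = algebraMap R B (PowerSeries.X ^ N0) := by
    have h0 : AdjoinRoot.mk g (X ^ n - X ^ p + C (PowerSeries.X ^ N0)) = 0 :=
      AdjoinRoot.mk_eq_zero.2 hdvd
    simp only [map_add, map_sub, map_pow, AdjoinRoot.mk_X, AdjoinRoot.mk_C] at h0
    rw [AdjoinRoot.algebraMap_eq, map_pow]
    rw [hn, pow_add] at h0
    linear_combination -h0
  have hWd : ∃ b : B, W ^ d = algebraMap R B PowerSeries.X * b := by
    have h1 : C (PowerSeries.X : R) ∣ X ^ d - g := by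
      rw [C_dvd_iff_dvd_coeff]
      intro i
      rw [PowerSeries.X_dvd_iff]
      have := congrArg (fun q => q.coeff i) hred
      simp only [coeff_map] at this
      rw [coeff_sub, map_sub, this, coeff_X_pow, coeff_X_pow]
      split_ifs <;> simp
    obtain ⟨b, hb⟩ := h1
    refine ⟨AdjoinRoot.mk g b, ?_⟩
    have := congrArg (AdjoinRoot.mk g) hb
    simp only [map_sub, map_pow, map_mul, AdjoinRoot.mk_X, AdjoinRoot.mk_C, AdjoinRoot.mk_self,
      sub_zero] at this
    exact this
  have hjac : ∀ b : B, IsUnit (1 - algebraMap R B PowerSeries.X * b) := by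
    intro b
    by_contra hu
    obtain ⟨m, hm, hbm⟩ := exists_max_ideal_of_mem_nonunits (mem_nonunits_iff.2 hu)
    have : Algebra.IsIntegral R B := inferInstance
    have hc := Ideal.isMaximal_comap_of_isIntegral_of_isMaximal (R := R) m
    have hmax := IsLocalRing.eq_maximalIdeal hc
    have hX : (PowerSeries.X : R) ∈ m.comap (algebraMap R B) := by
      rw [hmax, IsLocalRing.mem_maximalIdeal, mem_nonunits_iff, PowerSeries.isUnit_iff_constantCoeff]
      simp
    apply hm.ne_top
    rw [Ideal.eq_top_iff_one]
    have := m.add_mem hbm (m.mul_mem_right b (Ideal.mem_comap.1 hX))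
    simpa using this
  have hunit : IsUnit (1 - W ^ t) := by
    obtain ⟨b, hb⟩ := hWd
    obtain ⟨t', rfl⟩ : ∃ t', t = t' + 1 := ⟨t - 1, by omega⟩
    have h1 : (1 - W ^ (t' + 1)) ∣ 1 - (W ^ (t' + 1)) ^ d := by
      simpa using sub_dvd_pow_sub_pow (1 : B) (W ^ (t' + 1)) d
    refine isUnit_of_dvd_unit h1 ?_
    rw [← pow_mul, mul_comm, pow_mul, hb, pow_succ, mul_comm, mul_assoc]
    exact hjac _
  have hnorm := congrArg (Algebra.norm R) hW
  rw [map_mul, map_pow, Algebra.norm_algebraMap, hrank] at hnorm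
  have hu2 := hunit.map (Algebra.norm R)
  have ho := congrArg PowerSeries.order hnorm
  rw [PowerSeries.order_mul, PowerSeries.order_pow, ← pow_mul, PowerSeries.order_X_pow,
    PowerSeries.order_zero_of_unit hu2, add_zero] at ho
  have hne : (Algebra.norm R W).order ≠ ⊤ := by
    intro h
    rw [h] at ho
    have : p • (⊤ : ℕ∞) = ⊤ := by
      simp [hp.ne_zero]
    rw [this] at ho
    exact absurd ho (ENat.natCast_ne_top _).symm
  obtain ⟨i, hi⟩ := ENat.ne_top_iff_exists.1 hne
  rw [← hi] at ho
  have ho2 : p * i = N0 * d := by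
    have : ((p * i : ℕ) : ℕ∞) = ((N0 * d : ℕ) : ℕ∞) := by rw [← ho]; simp
    exact_mod_cast this
  exact ((hp.dvd_mul).1 (Dvd.intro _ ho2)).resolve_left hN

theorem aux_factor {k : Type*} [Field k] [IsAlgClosed k] (p t n N0 : ℕ) [CharP k p] (hp : p.Prime)
    (hn : n = p + t) (ht : 0 < t) (hpt : ¬ p ∣ t)
    (hN : ¬ p ∣ N0) (g : (PowerSeries k)[X]) (hg : g = X ^ n - X ^ p + C (PowerSeries.X ^ N0)) :
    g.Monic ∧ g.natDegree = n ∧ ∃ Z : Finset (PowerSeries k), Z.card = t ∧ (∀ w ∈ Z, g.eval w = 0) ∧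
    ∃ h : (PowerSeries k)[X], h.Monic ∧ h.natDegree = p ∧ Irreducible h ∧ h ∣ g := by
  have hN0 : N0 ≠ 0 := by rintro rfl; simp at hN
  have hnk : (n : k) ≠ 0 := fun h => hpt (by
    have := (CharP.cast_eq_zero_iff k p n).1 h
    rw [hn] at this
    exact (Nat.dvd_add_right (dvd_refl p)).1 this)
  have htk : (t : k) ≠ 0 := fun h => hpt ((CharP.cast_eq_zero_iff k p t).1 h)
  have hdeg : (-X ^ p + C (PowerSeries.X ^ N0) : (PowerSeries k)[X]).degree < n := by
    refine lt_of_le_of_lt (degree_add_le _ _) (max_lt ?_ ?_)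
    · rw [degree_neg, degree_X_pow]; exact_mod_cast (by omega : p < n)
    · exact lt_of_le_of_lt degree_C_le (by exact_mod_cast (by omega : 0 < n))
  have hg' : g = X ^ n + (-X ^ p + C (PowerSeries.X ^ N0)) := by rw [hg]; ring
  have hm : g.Monic := by rw [hg']; exact monic_X_pow_add hdeg
  have hnd : g.natDegree = n := by
    rw [hg', natDegree_eq_of_degree_eq_some]
    rw [degree_add_eq_left_of_degree_lt] <;> rw [degree_X_pow]
    exact hdeg
  have hmap : g.map (PowerSeries.constantCoeff (R := k)) = X ^ p * (X ^ t - 1) := by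
    rw [hg]; simp [hN0, hn]; ring
  refine ⟨hm, hnd, ?_⟩
  have hmem : ∀ ζ ∈ nthRootsFinset t (1 : k), ζ ^ t = 1 := fun ζ h => (mem_nthRootsFinset ht 1).1 h
  have hex : ∀ ζ ∈ nthRootsFinset t (1 : k), ∃ w : PowerSeries k, g.eval w = 0 ∧
      PowerSeries.constantCoeff (R := k) w = ζ := by
    intro ζ hζ
    have h1 := hmem ζ hζ
    have h0 : ζ ≠ 0 := by rintro rfl; rw [zero_pow (by omega)] at h1; exact zero_ne_one h1
    apply aux_hensel g hm ζ
    · rw [hmap]; simp [h1]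
    · rw [hmap]
      simp [derivative_mul, derivative_X_pow, h1, h0, htk]
  choose! W hW hWc using hex
  have hprim : ∃ ξ : k, IsPrimitiveRoot ξ t := by
    have : NeZero (t : k) := ⟨htk⟩
    exact HasEnoughRootsOfUnity.exists_primitiveRoot k t
  obtain ⟨ξ, hξ⟩ := hprim
  have hinj : Set.InjOn W (nthRootsFinset t (1 : k)) := by
    intro a ha b hb hab
    rw [← hWc a ha, ← hWc b hb, hab]
  refine ⟨(nthRootsFinset t (1 : k)).image W, ?_, ?_, ?_⟩
  · rw [Finset.card_image_of_injOn hinj, hξ.card_nthRootsFinset]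
  · intro w hw
    obtain ⟨ζ, hζ, rfl⟩ := Finset.mem_image.1 hw
    exact hW ζ hζ
  have hPd : (∏ ζ ∈ nthRootsFinset t (1 : k), (X - C (W ζ))) ∣ g := by
    rw [← Finset.prod_image (f := fun w => X - C w) hinj, Finset.prod,
      Multiset.prod_X_sub_C_dvd_iff_le_roots hm.ne_zero, Multiset.le_iff_subset (Finset.nodup _)]
    intro w hw
    obtain ⟨ζ, hζ, rfl⟩ := Finset.mem_image.1 (Finset.mem_def.2 hw)
    exact (mem_roots hm.ne_zero).2 (hW ζ hζ)
  have hPm : (∏ ζ ∈ nthRootsFinset t (1 : k), (X - C (W ζ))).Monic :=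
    monic_prod_of_monic _ _ (fun i _ => monic_X_sub_C _)
  have hPmap : (∏ ζ ∈ nthRootsFinset t (1 : k), (X - C (W ζ))).map
      (PowerSeries.constantCoeff (R := k)) = X ^ t - 1 := by
    rw [Polynomial.map_prod, X_pow_sub_one_eq_prod ht hξ]
    refine Finset.prod_congr rfl (fun ζ hζ => ?_)
    simp [hWc ζ hζ]
  obtain ⟨h, hh⟩ := hPd
  have hhm : h.Monic := hPm.of_mul_monic_left (hh ▸ hm)
  have hhmap : h.map (PowerSeries.constantCoeff (R := k)) = X ^ p := by
    have := congrArg (Polynomial.map (PowerSeries.constantCoeff (R := k))) hh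
    rw [Polynomial.map_mul, hPmap, hmap, mul_comm] at this
    exact (mul_left_cancel₀ (X_pow_sub_C_ne_zero ht (1 : k)) this).symm
  have hhd : h.natDegree = p := by
    rw [← hhm.natDegree_map (PowerSeries.constantCoeff (R := k)), hhmap, natDegree_X_pow]
  have hhg : h ∣ g := hh ▸ Dvd.intro_left _ rfl
  refine ⟨h, hhm, hhd, ?_, hhg⟩
  rw [hhm.irreducible_iff_natDegree']
  refine ⟨?_, ?_⟩
  · rintro rfl
    rw [natDegree_one] at hhd
    exact hp.ne_zero hhd.symm
  · rintro f1 f2 hf1 hf2 h12 hmem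
    rw [Finset.mem_Ioc, hhd] at hmem
    have hd2 : f2.map (PowerSeries.constantCoeff (R := k)) ∣ X ^ p := by
      rw [← hhmap, ← h12, Polynomial.map_mul]; exact Dvd.intro_left _ rfl
    obtain ⟨d, -, hd⟩ := (dvd_prime_pow prime_X _).1 hd2
    have hd' := eq_of_monic_of_associated (hf2.map _) (monic_X_pow d) hd
    have hdd : f2.natDegree = d := by
      rw [← hf2.natDegree_map (PowerSeries.constantCoeff (R := k)), hd', natDegree_X_pow]
    have := aux_norm p t n N0 d hp hn ht hN f2 hf2
      ((Dvd.intro_left _ h12).trans (hhg.trans (by rw [hg]))) hd'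
    have := Nat.le_of_dvd (by omega) this
    have := hp.pos
    omega


theorem aux_cyc {k : Type*} [Field k] [IsAlgClosed k] (p t n N0 : ℕ) [CharP k p] (hp : p.Prime)
    (hn : n = p + t) (ht : 0 < t) (hpt : ¬ p ∣ t)
    (hN : ¬ p ∣ N0) (M Ω : Type*) [Field M] [Algebra (PowerSeries k) M] [IsFractionRing (PowerSeries k) M]
    [Field Ω] [Algebra M Ω] [IsAlgClosure M Ω] :
    ∃ (Z : Finset M), Z.card = t ∧ 
      (∀ w ∈ Z, w ^ n - w ^ p + algebraMap (PowerSeries k) M PowerSeries.X ^ N0 = 0) ∧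
    ∃ σ : Ω ≃ₐ[M] Ω, (∀ w : Ω, 
        w ^ n - w ^ p + algebraMap M Ω (algebraMap (PowerSeries k) M PowerSeries.X) ^ N0 = 0 → 
        (σ ^ p) w = w) ∧
      ∃ w : Ω, w ^ n - w ^ p + algebraMap M Ω (algebraMap (PowerSeries k) M PowerSeries.X) ^ N0 = 0 ∧ 
        σ w ≠ w := by
  have hcl := IsAlgClosure.isAlgClosed M (K := Ω)
  have : Algebra.IsAlgebraic M Ω := IsAlgClosure.isAlgebraic
  have : Normal M Ω := IsAlgClosure.normal M Ω
  have hj : Function.Injective (algebraMap (PowerSeries k) M) := IsFractionRing.injective _ _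
  obtain ⟨hm, hnd, Z, hZc, hZ, h, hhm, hhd, hhi, hhg⟩ := aux_factor (k := k) p t n N0 hp hn ht hpt hN _ rfl
  set u : M := algebraMap (PowerSeries k) M PowerSeries.X with hu
  have hu0 : u ≠ 0 := by
    rw [hu, Ne, map_eq_zero_iff _ hj]; exact PowerSeries.X_ne_zero
  set gR : (PowerSeries k)[X] := X ^ n - X ^ p + C (PowerSeries.X ^ N0) with hgR
  set g : M[X] := gR.map (algebraMap (PowerSeries k) M) with hg
  have hg' : g = X ^ n - X ^ p + C (u ^ N0) := by
    rw [hg, hgR]; simp [hu]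
  have hnM : (n : M) ≠ 0 := by
    have hnk : (n : k) ≠ 0 := fun h => hpt (by
      have := (CharP.cast_eq_zero_iff k p n).1 h
      rw [hn] at this
      exact (Nat.dvd_add_right (dvd_refl p)).1 this)
    have h2 := ((algebraMap (PowerSeries k) M).comp (PowerSeries.C (R := k))).injective.ne hnk
    simpa using h2
  have hpM : (p : M) = 0 := by
    have h2 := congrArg ((algebraMap (PowerSeries k) M).comp (PowerSeries.C (R := k)))
      (CharP.cast_eq_zero k p)
    rw [map_natCast, map_zero] at h2
    exact h2
  have hsep : g.Separable := by
    rw [Polynomial.Separable]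
    have hd : derivative g = C (n : M) * X ^ (n - 1) := by
      rw [hg', derivative_add, derivative_C]; simp [derivative_X_pow, hpM]
    have hX : IsCoprime g X := by
      obtain ⟨p', hp'⟩ : ∃ p', p = p' + 1 := ⟨p - 1, by have := hp.pos; omega⟩
      obtain ⟨n', hn'⟩ : ∃ n', n = n' + 1 := ⟨n - 1, by have := hp.pos; omega⟩
      refine ⟨C (u ^ N0)⁻¹, - C (u ^ N0)⁻¹ * (X ^ n' - X ^ p'), ?_⟩
      have : C (u ^ N0)⁻¹ * C (u ^ N0) = (1 : M[X]) := by
        rw [← C_mul, inv_mul_cancel₀ (pow_ne_zero _ hu0), C_1]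
      rw [hg', hp', hn', pow_succ, pow_succ]
      linear_combination this
    rw [hd, isCoprime_mul_unit_left_right (isUnit_C.2 (isUnit_iff_ne_zero.2 hnM))]
    exact hX.pow_right
  have hev : ∀ w : Ω, aeval w g = w ^ n - w ^ p + algebraMap M Ω u ^ N0 := by
    intro w; rw [hg']; simp
  have hroot : ∀ w : Ω, w ∈ g.rootSet Ω ↔ w ^ n - w ^ p + algebraMap M Ω u ^ N0 = 0 := by
    intro w
    rw [mem_rootSet, hev]
    exact and_iff_right hsep.ne_zero
  refine ⟨Z.image (algebraMap (PowerSeries k) M), by rw [Finset.card_image_of_injective _ hj, hZc], ?_, ?_⟩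
  · intro w hw
    obtain ⟨z, hz, rfl⟩ := Finset.mem_image.1 hw
    have := congrArg (algebraMap (PowerSeries k) M) (hZ z hz)
    simpa [hgR] using this
  have hF : Fact ((g.map (algebraMap M Ω)).Splits) := ⟨IsAlgClosed.splits _⟩
  have hpdvd : p ∣ Nat.card g.Gal := by
    rw [Gal.card_of_separable hsep]
    let hM := h.map (algebraMap (PowerSeries k) M)
    have hirr : Irreducible hM := (hhm.irreducible_iff_irreducible_map_fraction_map (K := M)).1 hhi
    have hdvd : hM ∣ g := Polynomial.map_dvd _ hhg
    have hMm : hM.Monic := hhm.map _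
    have hMd : hM.natDegree = p := by rw [hhm.natDegree_map]; exact hhd
    have hspl : (hM.map (algebraMap M g.SplittingField)).Splits :=
      (SplittingField.splits g).of_dvd (map_ne_zero hsep.ne_zero) (Polynomial.map_dvd _ hdvd)
    obtain ⟨α, hα⟩ := hspl.exists_eval_eq_zero (by
      rw [degree_map]; rw [degree_eq_natDegree hirr.ne_zero, hMd]; exact_mod_cast hp.ne_zero)
    have hα' : aeval α hM = 0 := by rwa [aeval_def, ← eval_map]
    have hmin : minpoly M α = hM := (minpoly.eq_of_irreducible_of_monic hirr hα' hMm).symm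
    have hint : IsIntegral M α := ⟨hM, hMm, hα'⟩
    have e1 := IntermediateField.adjoin.finrank hint
    rw [hmin, hMd] at e1
    rw [← e1]
    exact ⟨_, (Module.finrank_mul_finrank M (IntermediateField.adjoin M {α}) g.SplittingField).symm⟩
  have : Fact p.Prime := ⟨hp⟩
  obtain ⟨τ, hτ⟩ := exists_prime_orderOf_dvd_card' p hpdvd
  obtain ⟨σ, hσ⟩ := Gal.restrict_surjective g Ω τ
  refine ⟨σ, ?_, ?_⟩
  · intro w hw
    have h1 := Gal.galActionHom_restrict g Ω (σ ^ p) ⟨w, (hroot w).2 hw⟩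
    have h2 : τ ^ p = 1 := by rw [← hτ, pow_orderOf_eq_one]
    rw [map_pow, hσ, h2, map_one] at h1
    exact h1.symm
  · by_contra hcon
    push Not at hcon
    have h1 : τ = 1 := by
      apply Gal.galActionHom_injective g Ω
      rw [map_one]
      ext ⟨w, hw⟩
      have h1 := Gal.galActionHom_restrict g Ω σ ⟨w, hw⟩
      rw [hσ] at h1
      rw [h1]
      exact hcon w ((hroot w).1 hw)
    rw [h1, orderOf_one] at hτ
    exact hp.one_lt.ne hτ


theorem aux_key {F : Type*} [Field F] (p t n m : ℕ) (hn : n = p + t) (U y : F) (hU0 : U ≠ 0)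
    (hy : y ≠ 0) : (((U ^ m / y) ^ n - (U ^ m / y) ^ p + U ^ (m * n)) =
      (y ^ n - (U ^ (t * m))⁻¹ * y ^ t + 1) * (U ^ m / y) ^ n) := by
  have h1 : U ^ (m * n) = U ^ (m * p) * U ^ (m * t) := by rw [hn, mul_add, pow_add]
  have h2 : U ^ (t * m) = U ^ (m * t) := by rw [mul_comm]
  have h3 : y ^ n = y ^ p * y ^ t := by rw [hn, pow_add]
  rw [div_pow, div_pow, ← pow_mul, ← pow_mul, h1, h2, h3]
  have a1 : U ^ (m * p) ≠ 0 := pow_ne_zero _ hU0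
  have a2 : U ^ (m * t) ≠ 0 := pow_ne_zero _ hU0
  have a3 : y ^ p ≠ 0 := pow_ne_zero _ hy
  have a4 : y ^ t ≠ 0 := pow_ne_zero _ hy
  generalize U ^ (m * p) = A at *
  generalize U ^ (m * t) = B at *
  generalize y ^ p = A' at *
  generalize y ^ t = B' at *
  field_simp
  ring

theorem aux_ddc {F : Type*} [Field F] (A w : F) (hA : A ≠ 0) : A / (A / w) = w := by
  by_cases hw : w = 0
  · simp [hw]
  · field_simp

theorem aux_dri {F : Type*} [Field F] (A w w' : F) (hA : A ≠ 0) (h : A / w = A / w') : w = w' := by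
  rw [← aux_ddc A w hA, h, aux_ddc A w' hA]

theorem aux_local.{u} (k : Type u) [Field k] [IsAlgClosed k] (p t n : ℕ) [CharP k p] (hp : p.Prime)
    (ht : 0 < t) (hpt : ¬ p ∣ t) (hn : n = p + t) (a : k) (ha : a ≠ 0) (s : ℕ) (hs : 0 < s) :
    ∃ (Ω : Type u) (_ : Field Ω) (_ : Algebra (RatFunc k) Ω) (_ : IsAlgClosed Ω) (T : Ω)
      (Z : Finset Ω) (σ : Ω ≃ₐ[RatFunc k] Ω),
      T = algebraMap (RatFunc k) Ω (algebraMap k (RatFunc k) a * RatFunc.X ^ s) ∧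
      Z.card = t ∧ (∀ y ∈ Z, y ^ n - T * y ^ t + 1 = 0 ∧ σ y = y) ∧
      (∀ y : Ω, y ^ n - T * y ^ t + 1 = 0 → (σ ^ p) y = y) ∧
      ∃ y : Ω, y ^ n - T * y ^ t + 1 = 0 ∧ σ y ≠ y := by
  have hpF : Fact p.Prime := ⟨hp⟩
  obtain ⟨e, m, hm, hsm⟩ := Nat.exists_eq_pow_mul_and_not_dvd hs.ne' p hp.ne_one
  obtain ⟨c, hc⟩ := IsAlgClosed.exists_pow_nat_eq a⁻¹ hs
  have hc0 : c ≠ 0 := by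
    rintro rfl
    rw [zero_pow hs.ne'] at hc
    exact inv_ne_zero ha hc.symm
  have hN : ¬ p ∣ m * n := by
    intro h
    rcases hp.dvd_mul.1 h with h | h
    · exact hm h
    · rw [hn] at h
      exact hpt ((Nat.dvd_add_right (dvd_refl p)).1 h)
  let M := FractionRing (PowerSeries k)
  let Ω := AlgebraicClosure M
  have hj : Function.Injective (algebraMap (PowerSeries k) M) := IsFractionRing.injective _ _
  obtain ⟨Z, hZc, hZ, σ, hσ1, w0, hw0, hσ2⟩ := aux_cyc (k := k) p t n (m * n) hp hn ht hpt hN M Ω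
  set u : M := algebraMap (PowerSeries k) M PowerSeries.X with hu
  have hu0 : u ≠ 0 := by
    rw [hu, Ne, map_eq_zero_iff _ hj]; exact PowerSeries.X_ne_zero
  have hXtr : Transcendental k (PowerSeries.X : PowerSeries k) := by
    rw [transcendental_iff]
    intro q hq
    have : aeval (PowerSeries.X : PowerSeries k) q = (q : PowerSeries k) := by
      have h := aeval_algHom_apply (Polynomial.coeToPowerSeries.algHom (R := k) k) X q
      simpa [Polynomial.coeToPowerSeries.algHom_apply] using h
    rw [this] at hq
    exact_mod_cast hq
  have hutr : Transcendental k u := (transcendental_algebraMap_iff hj).2 hXtr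
  have hcM : algebraMap k M c ≠ 0 := by simpa using hc0
  let x : M := algebraMap k M c * (u ^ t)⁻¹
  have hxtr : Transcendental k x := by
    intro h
    apply hutr
    refine IsAlgebraic.of_pow ht (r := u) ?_
    have h2 := (h.inv).mul (isAlgebraic_algebraMap (A := M) c)
    have : x⁻¹ * algebraMap k M c = u ^ t := by
      simp only [x]; rw [mul_inv, inv_inv, mul_right_comm, inv_mul_cancel₀ hcM, one_mul]
    rwa [this] at h2
  let i : RatFunc k →ₐ[k] M := IsFractionRing.liftAlgHom (transcendental_iff_injective.1 hxtr)
  have hiX : i RatFunc.X = x := by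
    rw [← RatFunc.algebraMap_X]
    simp only [i, IsFractionRing.liftAlgHom_apply, IsFractionRing.lift_algebraMap]
    simp
  let _ : Algebra (RatFunc k) M := i.toRingHom.toAlgebra
  have : IsScalarTower (RatFunc k) M Ω := inferInstance
  let U : Ω := algebraMap M Ω u
  have hU0 : U ≠ 0 := by simpa [U] using hu0
  let T : Ω := ((U ^ (t * m))⁻¹) ^ (p ^ e)
  have hT : T = algebraMap (RatFunc k) Ω (algebraMap k (RatFunc k) a * RatFunc.X ^ s) := by
    rw [IsScalarTower.algebraMap_apply (RatFunc k) M Ω]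
    have h1 : algebraMap (RatFunc k) M (algebraMap k (RatFunc k) a * RatFunc.X ^ s) =
        ((u ^ (t * m))⁻¹) ^ (p ^ e) := by
      change i _ = _
      rw [map_mul, AlgHom.commutes, map_pow, hiX]
      simp only [x]
      rw [mul_pow, ← map_pow, hc, map_inv₀, ← mul_assoc, mul_inv_cancel₀ (by simpa using ha), one_mul,
        inv_pow, inv_pow, ← pow_mul, ← pow_mul, hsm]
      congr 2
      ring
    rw [h1]
    simp [T, U]
  have hchM : CharP M p := charP_of_injective_algebraMap (algebraMap k M).injective p
  have hch : CharP Ω p := charP_of_injective_algebraMap (algebraMap M Ω).injective p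
  have hqinj : ∀ y z : Ω, y ^ (p ^ e) = z ^ (p ^ e) → y = z := by
    intro y z h
    rw [← sub_eq_zero, ← sub_pow_char_pow] at h
    exact sub_eq_zero.1 (pow_eq_zero_iff (pow_ne_zero _ hp.ne_zero) |>.1 h)
  have hw0' : ∀ w : Ω, w ^ n - w ^ p + U ^ (m * n) = 0 → w ≠ 0 := by
    rintro w hw rfl
    rw [zero_pow (by omega), zero_pow hp.ne_zero, sub_zero, zero_add] at hw
    exact pow_ne_zero _ hU0 hw
  have key1 : ∀ y : Ω, y ≠ 0 → (((U ^ m / y) ^ n - (U ^ m / y) ^ p + U ^ (m * n)) =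
      (y ^ n - (U ^ (t * m))⁻¹ * y ^ t + 1) * (U ^ m / y) ^ n) := by
    intro y hy
    exact aux_key p t n m hn U y hU0 hy
  have key2 : ∀ y : Ω, (y ^ (p ^ e)) ^ n - T * (y ^ (p ^ e)) ^ t + 1 =
      (y ^ n - (U ^ (t * m))⁻¹ * y ^ t + 1) ^ (p ^ e) := by
    intro y
    rw [add_pow_char_pow, sub_pow_char_pow, one_pow, mul_pow, ← pow_mul, ← pow_mul, ← pow_mul,
      ← pow_mul, mul_comm n, mul_comm t (p ^ e)]
  have hfw : ∀ w : Ω, w ^ n - w ^ p + U ^ (m * n) = 0 →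
      ((U ^ m / w) ^ (p ^ e)) ^ n - T * ((U ^ m / w) ^ (p ^ e)) ^ t + 1 = 0 := by
    intro w hw
    have h0 := hw0' w hw
    have h1 : U ^ m / w ≠ 0 := div_ne_zero (pow_ne_zero _ hU0) h0
    have h2 := key1 _ h1
    rw [aux_ddc _ _ (pow_ne_zero _ hU0), hw] at h2
    have h3 := (mul_eq_zero.1 h2.symm).resolve_right (pow_ne_zero _ h0)
    rw [key2, h3, zero_pow (pow_ne_zero _ hp.ne_zero)]
  have hbw : ∀ y : Ω, y ^ n - T * y ^ t + 1 = 0 → ∃ w : Ω, w ^ n - w ^ p + U ^ (m * n) = 0 ∧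
      y = (U ^ m / w) ^ (p ^ e) := by
    intro y hy
    obtain ⟨y1, rfl⟩ := IsAlgClosed.exists_pow_nat_eq y (pow_pos hp.pos e)
    have hy0 : y1 ≠ 0 := by
      rintro rfl
      rw [zero_pow (pow_ne_zero _ hp.ne_zero), zero_pow (by omega), zero_pow (by omega)] at hy
      simp at hy
    rw [key2, pow_eq_zero_iff (pow_ne_zero _ hp.ne_zero)] at hy
    refine ⟨U ^ m / y1, ?_, ?_⟩
    · rw [key1 _ hy0, hy, zero_mul]
    · rw [aux_ddc _ _ (pow_ne_zero _ hU0)]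
  have hσU : ∀ (τ : Ω ≃ₐ[M] Ω) (w : Ω), τ ((U ^ m / w) ^ (p ^ e)) = (U ^ m / τ w) ^ (p ^ e) := by
    intro τ w
    rw [map_pow, map_div₀, map_pow, AlgEquiv.commutes]
  have hinj : ∀ w w' : Ω, w ≠ 0 → w' ≠ 0 → (U ^ m / w) ^ (p ^ e) = (U ^ m / w') ^ (p ^ e) → w = w' := by
    intro w w' h0 h0' h
    have := hqinj _ _ h
    exact aux_dri _ _ _ (pow_ne_zero _ hU0) this
  have hZ' : ∀ w ∈ Z, (algebraMap M Ω w) ^ n - (algebraMap M Ω w) ^ p + U ^ (m * n) = 0 := by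
    intro w hw
    have := congrArg (algebraMap M Ω) (hZ w hw)
    simpa [U] using this
  refine ⟨Ω, inferInstance, inferInstance, inferInstance, T,
    Z.image (fun w => (U ^ m / algebraMap M Ω w) ^ (p ^ e)), σ.restrictScalars (RatFunc k), hT, ?_, ?_, ?_, ?_⟩
  · rw [Finset.card_image_of_injOn, hZc]
    intro w hw w' hw' h
    exact (algebraMap M Ω).injective (hinj _ _ (hw0' _ (hZ' w hw)) (hw0' _ (hZ' w' hw')) h)
  · intro y hy
    obtain ⟨w, hw, rfl⟩ := Finset.mem_image.1 hy
    refine ⟨hfw _ (hZ' w hw), ?_⟩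
    rw [AlgEquiv.restrictScalars_apply, hσU, AlgEquiv.commutes]
  · intro y hy
    obtain ⟨w, hw, rfl⟩ := hbw y hy
    have h1 := hσU (σ ^ p) w
    rw [hσ1 w hw] at h1
    have h2 : ∀ (j : ℕ) (z : Ω), ((σ.restrictScalars (RatFunc k)) ^ j) z = (σ ^ j) z := by
      intro j
      induction j with
      | zero => intro z; rfl
      | succ j ih => intro z; rw [pow_succ, pow_succ, AlgEquiv.mul_apply, AlgEquiv.mul_apply, ih]; rfl
    rw [h2]
    exact h1
  · refine ⟨(U ^ m / w0) ^ (p ^ e), hfw _ hw0, ?_⟩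
    intro h
    rw [AlgEquiv.restrictScalars_apply, hσU] at h
    refine hσ2 (hinj _ _ ?_ (hw0' _ hw0) h)
    exact (map_ne_zero_iff σ σ.injective).2 (hw0' _ hw0)


theorem aux_perm {F : Type*} [Field F] (f : F[X]) (Ω : Type*) [Field Ω] [Algebra F Ω]
    [Fact ((f.map (algebraMap F f.SplittingField)).Splits)] [Fact ((f.map (algebraMap F Ω)).Splits)]
    (σ : Ω ≃ₐ[F] Ω) : ∃ π ∈ (Gal.galActionHom f f.SplittingField).range,
      ∃ e : f.rootSet f.SplittingField ≃ f.rootSet Ω, ∀ y, (e (π y) : Ω) = σ (e y) := by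
  refine ⟨_, ⟨Gal.restrict f Ω σ, rfl⟩,
    (Gal.rootsEquivRoots f f.SplittingField).symm.trans (Gal.rootsEquivRoots f Ω), ?_⟩
  intro y
  rw [← Gal.galActionHom_restrict f Ω σ]
  change ((Gal.rootsEquivRoots f Ω) ((Gal.rootsEquivRoots f f.SplittingField).symm
      ((Gal.restrict f Ω σ) • y)) : Ω) = ((Gal.restrict f Ω σ) •
        (Gal.rootsEquivRoots f Ω) ((Gal.rootsEquivRoots f f.SplittingField).symm y) : f.rootSet Ω)
  rw [Gal.smul_def f f.SplittingField, Gal.smul_def f Ω, Equiv.symm_apply_apply, Equiv.symm_apply_apply]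

theorem aux_mem {K L : Type*} [Field K] [Field L] [Algebra K L] (f : K[X]) (T0 : K) (n t : ℕ)
    (hf : f = X ^ n - C T0 * X ^ t + 1) (h0 : f ≠ 0) (y : L) :
    y ∈ f.rootSet L ↔ y ^ n - algebraMap K L T0 * y ^ t + 1 = 0 := by
  rw [mem_rootSet, and_iff_right h0, hf]
  simp

theorem aux_map {K L : Type*} [Field K] [Field L] [Algebra K L] (f : K[X]) (T0 : K) (n t : ℕ)
    (hf : f = X ^ n - C T0 * X ^ t + 1) :
    f.map (algebraMap K L) = X ^ n - C (algebraMap K L T0) * X ^ t + 1 := by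
  rw [hf]
  simp

theorem aux_prod {K L : Type*} [Field K] [Field L] [Algebra K L] (f : K[X]) (hm : f.Monic)
    (hsep : f.Separable) (hs : (f.map (algebraMap K L)).Splits) :
    ∏ y : f.rootSet L, (X - C (y : L)) = f.map (algebraMap K L) := by
  have h1 := hs.eq_prod_roots_of_monic (hm.map _)
  have h2 : (f.map (algebraMap K L)).roots.Nodup := nodup_roots hsep.map
  have h4 : ∏ y ∈ (f.map (algebraMap K L)).roots.toFinset, (X - C y) =
      ∏ y : f.rootSet L, (X - C (y : L)) := by
    refine Finset.prod_subtype _ (fun y => ?_) (fun y => X - C y)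
    simp [rootSet_def, aroots_def]
  rw [← h4, Finset.prod, Multiset.toFinset_val, Multiset.dedup_eq_self.2 h2]
  exact h1.symm

theorem aux_sign' (k : Type*) {K E : Type*} [Field k] [IsAlgClosed k] [Field K] [Field E] [Algebra k K]
    [Algebra K E]
    (p t n : ℕ) [CharP E p] (hodd : Odd p) (hn : n = p + t) (hp : p.Prime)
    (ht : 0 < t) (T : E) (S : Set E) [Fintype S] (hS : Fintype.card S = n)
    (hv : ∏ y : S, (X - C (y : E)) = X ^ n - C T * X ^ t + 1)
    (σ : E ≃ₐ[K] E) (π : Equiv.Perm S) (hπ : ∀ y : S, (π y : E) = σ y) :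
    Equiv.Perm.sign π = 1 := by
  let _ : Algebra k E := ((algebraMap K E).comp (algebraMap k K)).toAlgebra
  have : IsScalarTower k K E := IsScalarTower.of_algebraMap_eq (fun _ => rfl)
  exact aux_sign (k := k) p t n hodd hn hp ht T S hS hv σ π hπ

theorem stmt_4 (p : ℕ) (hp : p.Prime) (hodd : Odd p)
    (t : ℕ) (ht : 2 < t) (hpt : ¬ p ∣ t)
    (k : Type*) [Field k] [IsAlgClosed k] [CharP k p]
    (n : ℕ) (hn : n = p + t)
    (a : k) (ha : a ≠ 0) (s : ℕ) (hs : 0 < s)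
    (f : Polynomial (RatFunc k))
    (hf : f = X ^ n - C (algebraMap k (RatFunc k) a * RatFunc.X ^ s) * X ^ t + 1) :
    haveI : Fact ((f.map (algebraMap (RatFunc k) f.SplittingField)).Splits) :=
      ⟨SplittingField.splits f⟩
    Fintype.card (f.rootSet f.SplittingField) = n ∧
      (Polynomial.Gal.galActionHom f f.SplittingField).range =
        alternatingGroup (f.rootSet f.SplittingField) := by
  have hFact : Fact ((f.map (algebraMap (RatFunc k) f.SplittingField)).Splits) := ⟨SplittingField.splits f⟩
  have hpF : Fact p.Prime := ⟨hp⟩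
  set T0 : RatFunc k := algebraMap k (RatFunc k) a * RatFunc.X ^ s with hT0
  have hchK : CharP (RatFunc k) p :=
    charP_of_injective_algebraMap (algebraMap k (RatFunc k)).injective p
  have hchE : CharP f.SplittingField p :=
    charP_of_injective_algebraMap (algebraMap (RatFunc k) f.SplittingField).injective p
  have hpK : (p : RatFunc k) = 0 := CharP.cast_eq_zero _ p
  have htK : (t : RatFunc k) ≠ 0 := fun h => hpt ((CharP.cast_eq_zero_iff (RatFunc k) p t).1 h)
  have hdeg : (- C T0 * X ^ t + 1 : (RatFunc k)[X]).degree < n := by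
    refine lt_of_le_of_lt (degree_add_le _ _) (max_lt ?_ ?_)
    · rw [← C_neg]
      exact lt_of_le_of_lt (degree_C_mul_X_pow_le _ _)
        (by have := hp.pos; exact_mod_cast (by omega : t < n))
    · exact lt_of_le_of_lt degree_one_le (by exact_mod_cast (by omega : 0 < n))
  have hf' : f = X ^ n + (- C T0 * X ^ t + 1) := by rw [hf]; ring
  have hm : f.Monic := by rw [hf']; exact monic_X_pow_add hdeg
  have hnd : f.natDegree = n := by
    rw [hf', natDegree_eq_of_degree_eq_some]
    rw [degree_add_eq_left_of_degree_lt] <;> rw [degree_X_pow]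
    exact hdeg
  have hsep : f.Separable := by
    rw [Polynomial.Separable]
    obtain ⟨t', ht'⟩ : ∃ t', t = t' + 1 := ⟨t - 1, by omega⟩
    have hd : derivative f = C (t : RatFunc k) * (X ^ t' * (X ^ p - C T0)) := by
      have hn1 : n - 1 = t' + p := by omega
      have ht1 : t - 1 = t' := by omega
      rw [hf, derivative_add, derivative_sub, derivative_X_pow, derivative_C_mul, derivative_X_pow,
        derivative_one, hn1, ht1]
      have : (n : RatFunc k) = t := by rw [hn]; push_cast; rw [hpK, zero_add]
      rw [this, pow_add]
      ring
    rw [hd, isCoprime_mul_unit_left_right (isUnit_C.2 (isUnit_iff_ne_zero.2 htK))]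
    refine ⟨1, -X, ?_⟩
    rw [hf, hn, ht']
    ring
  have hcard : Fintype.card (f.rootSet f.SplittingField) = n := by
    rw [← hnd, ← card_rootSet_eq_natDegree hsep (SplittingField.splits f)]
  refine ⟨hcard, ?_⟩
  have hnormal : Normal (RatFunc k) f.SplittingField := Normal.of_isSplittingField f
  have hprod : ∏ y : f.rootSet f.SplittingField, (X - C (y : f.SplittingField)) =
      X ^ n - C (algebraMap (RatFunc k) f.SplittingField T0) * X ^ t + 1 := by
    exact (aux_prod f hm hsep (SplittingField.splits f)).trans (aux_map f T0 n t hf)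
  apply le_antisymm
  · rintro π ⟨g, rfl⟩
    obtain ⟨σ, rfl⟩ := Gal.restrict_surjective f f.SplittingField g
    rw [Equiv.Perm.mem_alternatingGroup]
    have h := aux_sign' k p t n hodd hn hp (by omega)
      (algebraMap (RatFunc k) f.SplittingField T0) (f.rootSet f.SplittingField) hcard hprod σ
      (Gal.galActionHom f f.SplittingField (Gal.restrict f f.SplittingField σ))
      (fun y => Gal.galActionHom_restrict f f.SplittingField σ y)
    convert h
  · obtain ⟨Ω, iF, iA, iC, T, Z, σ, hT, hZc, hZ, h1, y0, hy0, hy0'⟩ :=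
      aux_local k p t n hp (by omega) hpt hn a ha s hs
    rw [← hT0] at hT
    have hFΩ : Fact ((f.map (algebraMap (RatFunc k) Ω)).Splits) := ⟨IsAlgClosed.splits _⟩
    obtain ⟨π, hπ, e, he⟩ := aux_perm f Ω σ
    have hpow : ∀ (j : ℕ) y, (e ((π ^ j) y) : Ω) = (σ ^ j) (e y) := by
      intro j
      induction j with
      | zero => intro y; rfl
      | succ j ih =>
        intro y
        rw [pow_succ, pow_succ, Equiv.Perm.mul_apply, AlgEquiv.mul_apply, ih, he]
    have hrt : ∀ y : Ω, y ^ n - T * y ^ t + 1 = 0 ↔ y ∈ f.rootSet Ω := by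
      intro y; rw [aux_mem f T0 n t hf hm.ne_zero y, hT]
    have hpi : π ^ p = 1 := by
      ext1 y
      apply e.injective
      apply Subtype.ext
      rw [hpow, h1 _ ((hrt _).2 (e y).2)]
      rfl
    have hpi1 : π ≠ 1 := by
      intro h
      apply hy0'
      have := he (e.symm ⟨y0, (hrt _).1 hy0⟩)
      rw [h] at this
      simpa using this.symm
    have hord : orderOf π = p := orderOf_eq_prime hpi hpi1
    have hsupp : π.support.card ≤ p := by
      have hc : t ≤ (π.supportᶜ).card := by
        rw [← hZc, ← Finset.card_attach]
        refine Finset.card_le_card_of_injOn (fun z => e.symm ⟨z.1, (hrt _).1 (hZ z.1 z.2).1⟩) ?_ ?_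
        · intro z _
          simp only [Finset.coe_compl, Set.mem_compl_iff, Finset.mem_coe, Equiv.Perm.mem_support, not_not]
          apply e.injective
          apply Subtype.ext
          rw [he]
          simpa using (hZ z.1 z.2).2
        · intro z _ z' _ h
          have := e.symm.injective h
          exact Subtype.ext (congrArg (fun w : f.rootSet Ω => (w : Ω)) this)
      rw [Finset.card_compl, hcard] at hc
      have := hp.pos
      omega
    have hcyc : π.IsCycle := by
      apply Equiv.Perm.isCycle_of_prime_order
      · rw [hord]; exact hp
      · rw [hord]; have := hp.pos; omega
    have hcp : π.support.card = p := by rw [← hcyc.orderOf, hord]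
    refine aux_jordan _ ?_ p hp π hπ hcyc hcp (by rw [hcard]; omega)
    apply MulAction.isPreprimitive_of_is_two_pretransitive
    rw [MulAction.is_two_pretransitive_iff]
    intro y z y' z' hyz hyz'
    obtain ⟨τ, hτ1, hτ2⟩ := aux_two k p t n hp (by omega) hpt hn a ha s hs f.SplittingField
      y.1 z.1 y'.1 z'.1 _ rfl ((aux_mem f T0 n t hf hm.ne_zero _).1 y.2) ((aux_mem f T0 n t hf hm.ne_zero _).1 z.2) (fun h => hyz (Subtype.ext h))
      ((aux_mem f T0 n t hf hm.ne_zero _).1 y'.2) ((aux_mem f T0 n t hf hm.ne_zero _).1 z'.2) (fun h => hyz' (Subtype.ext h))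
    refine ⟨⟨_, ⟨Gal.restrict f f.SplittingField τ, rfl⟩⟩, ?_, ?_⟩
    · apply Subtype.ext
      exact (Gal.galActionHom_restrict f f.SplittingField τ y).trans hτ1
    · apply Subtype.ext
      exact (Gal.galActionHom_restrict f f.SplittingField τ z).trans hτ2
end

section
/- Let k be an algebraically closed field of characteristic 2, let t be an odd positive integer, let n = 2 + t, let a be a nonzero element of k, and let s be a positive integer. Then the polynomial f = Y^n - a·X^s·Y^t + 1 over the rational function field k(X) has n distinct roots in a splitting field, and the image of its Galois group in the group of permutations of this set of roots is the full symmetric group on those n roots. -/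
open Polynomial

open scoped Classical

theorem grp_aux {S : Type*} [Finite S] [DecidableEq S] (G : Subgroup (Equiv.Perm S))
    (htr : MulAction.IsPretransitive G S) (hodd : Odd (Nat.card S))
    (α β : S) (hab : α ≠ β) (hsw : Equiv.swap α β ∈ G)
    (hD : ∀ r r' : S, r ≠ α → r ≠ β → r' ≠ α → r' ≠ β →
      ∃ g ∈ G, g r = r' ∧ (g α = α ∨ g α = β)) : G = ⊤ := by
  have hprim : MulAction.IsPreprimitive G S := by
    apply MulAction.IsPreprimitive.of_isTrivialBlock_base α
    intro B hα hB
    have inv : ∀ g ∈ G, ∀ x ∈ B, g x ∈ B → ∀ y ∈ B, g y ∈ B := by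
      intro g hg x hx hgx y hy
      have := hB.smul_eq_of_mem (g := ⟨g, hg⟩) hx hgx
      rw [← this]
      exact Set.smul_mem_smul_set (a := (⟨g, hg⟩ : G)) hy
    by_cases hR : ∃ r ∈ B, r ≠ α ∧ r ≠ β
    · obtain ⟨r, hr, h1, h2⟩ := hR
      have hβ : β ∈ B := by
        have := inv _ hsw r hr (by rwa [Equiv.swap_apply_of_ne_of_ne h1 h2]) α hα
        simpa using this
      right
      ext x
      simp only [Set.mem_univ, iff_true]
      by_cases h3 : x = α
      · rwa [h3]
      by_cases h4 : x = β
      · rwa [h4]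
      obtain ⟨g, hg, hgr, hg2⟩ := hD r x h1 h2 h3 h4
      rw [← hgr]
      refine inv g hg α hα ?_ r hr
      rcases hg2 with h | h <;> rwa [h]
    · push Not at hR
      left
      by_cases hβ : β ∈ B
      · have hBe : B = {α, β} := by
          ext x
          simp only [Set.mem_insert_iff, Set.mem_singleton_iff]
          constructor
          · intro hx
            by_cases h : x = α
            · exact Or.inl h
            · exact Or.inr (hR x hx h)
          · rintro (rfl | rfl) <;> assumption
        have hd := hB.ncard_dvd_card ⟨α, hα⟩
        rw [hBe, Set.ncard_pair hab] at hd
        exact absurd (even_iff_two_dvd.mpr hd) (Nat.not_even_iff_odd.mpr hodd)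
      · intro x hx y hy
        have : ∀ z ∈ B, z = α := by
          intro z hz
          by_contra h
          exact hβ (hR z hz h ▸ hz)
        rw [this x hx, this y hy]
  exact Equiv.Perm.subgroup_eq_top_of_isPreprimitive_of_isSwap_mem hprim _ ⟨α, β, hab, rfl⟩ hsw

/-- elements of the range of the permutation representation coming from a big field -/
theorem mem_range_aux {K Ω : Type*} [Field K] [Field Ω] [Algebra K Ω] (P : K[X])
    [Fact ((P.map (algebraMap K Ω)).Splits)] (σ : Ω ≃ₐ[K] Ω) :
    ∃ g ∈ (Gal.galActionHom P Ω).range, ∀ x, ((g x : P.rootSet Ω) : Ω) = σ x :=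
  ⟨_, ⟨Gal.restrict P Ω σ, rfl⟩, fun x => Gal.galActionHom_restrict P Ω σ x⟩

theorem field_aux {K F Ω : Type*} [Field K] [Field F] [Field Ω] [Algebra K Ω] [Algebra F Ω]
    [Algebra K F] [IsScalarTower K F Ω]
    [IsAlgClosure F Ω] (t : ℕ) (ht : Odd t) (P : K[X])
    [Fact ((P.map (algebraMap K Ω)).Splits)] (hirr : Irreducible P) (hsep : P.Separable)
    (hdeg : P.natDegree = 2 + t)
    (hnot : ∃ y ∈ P.rootSet Ω, y ∉ Set.range (algebraMap F Ω))
    {ι : Type*} (hι : Nat.card ι = t) (ρ : ι → (Ω ≃ₐ[K] Ω))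
    (hρ : ∀ i y, ρ i y ∈ Set.range (algebraMap F Ω) ↔ y ∈ Set.range (algebraMap F Ω))
    (y₀ : Ω) (hy₀ : y₀ ∈ P.rootSet Ω) (hy₀F : y₀ ∈ Set.range (algebraMap F Ω))
    (hinj : Function.Injective fun i => ρ i y₀) :
    (Gal.galActionHom P Ω).range = ⊤ := by
  have hcard : Nat.card (P.rootSet Ω) = 2 + t := by
    rw [Nat.card_eq_fintype_card, ← hdeg]
    exact card_rootSet_eq_natDegree hsep (Fact.out)
  have hfin : Finite ι := Nat.finite_of_card_ne_zero (by rw [hι]; rintro rfl; simp at ht)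
  obtain ⟨α, hα, hαF⟩ := hnot
  have := IsAlgClosure.isAlgClosed (R := F) (K := Ω)
  have := IsAlgClosure.isAlgebraic (R := F) (K := Ω)
  have hPα : aeval α P = 0 := (mem_rootSet.mp hα).2
  have hsepα : IsSeparable F α := by
    refine (hsep.map (f := algebraMap K F)).of_dvd ?_
    apply minpoly.dvd
    rwa [aeval_map_algebraMap]
  -- a nontrivial conjugate
  obtain ⟨σ, hσ⟩ : ∃ σ : Ω ≃ₐ[F] Ω, σ α ≠ α := by
    by_contra! hcon
    apply hαF
    have hdeg1 : (minpoly F α).natDegree = 1 := by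
      rw [← card_rootSet_eq_natDegree (K := Ω) hsepα (IsAlgClosed.splits _), Fintype.card_eq_one_iff]
      refine ⟨⟨α, ?_⟩, ?_⟩
      · rw [mem_rootSet]
        exact ⟨minpoly.ne_zero (Algebra.IsIntegral.isIntegral α), minpoly.aeval _ _⟩
      · rintro ⟨y, hy⟩
        have hmin : minpoly F y = minpoly F α := by
          symm
          apply minpoly.eq_of_irreducible_of_monic
          · exact minpoly.irreducible (Algebra.IsIntegral.isIntegral α)
          · exact (mem_rootSet.mp hy).2
          · exact minpoly.monic (Algebra.IsIntegral.isIntegral α)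
        obtain ⟨g, hg⟩ := (Normal.minpoly_eq_iff_mem_orbit Ω).mp hmin
        apply Subtype.ext
        have := hcon g
        change g α = y at hg
        simp [← hg, this]
    have := (minpoly.natDegree_eq_one_iff (A := F) (x := α)).mp hdeg1
    exact this
  have hβ : σ α ∈ P.rootSet Ω := by
    rw [mem_rootSet]
    refine ⟨hirr.ne_zero, ?_⟩
    have := congrArg (σ.restrictScalars K) hPα
    rw [map_zero, ← aeval_algHom_apply] at this
    exact this
  have hβF : σ α ∉ Set.range (algebraMap F Ω) := by
    rintro ⟨z, hz⟩
    apply hαF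
    refine ⟨z, ?_⟩
    apply σ.injective
    rw [← hz]; simp
  have hρr : ∀ i, ρ i y₀ ∈ P.rootSet Ω := by
    intro i
    rw [mem_rootSet]
    refine ⟨hirr.ne_zero, ?_⟩
    have := congrArg (ρ i) (mem_rootSet.mp hy₀).2
    rw [map_zero, ← aeval_algHom_apply] at this
    exact this
  -- all roots
  have hall : ∀ y ∈ P.rootSet Ω, y = α ∨ y = σ α ∨ ∃ i, ρ i y₀ = y := by
    have h1 : (Set.range fun i => ρ i y₀).ncard = t := by
      rw [← Nat.card_coe_set_eq, Nat.card_range_of_injective hinj, hι]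
    have hsub : ({α, σ α} ∪ Set.range fun i => ρ i y₀) ⊆ P.rootSet Ω := by
      rintro y (h | ⟨i, rfl⟩)
      · rcases h with rfl | rfl <;> assumption
      · exact hρr i
    have h2 : ({α, σ α} ∪ Set.range fun i => ρ i y₀).ncard = 2 + t := by
      rw [Set.ncard_union_eq, h1, Set.ncard_pair (Ne.symm hσ)]
      · rw [Set.disjoint_left]
        rintro y hy ⟨i, rfl⟩
        have h3 := (hρ i y₀).mpr hy₀F
        rcases hy with h | h
        · exact hαF (h ▸ h3)
        · rw [Set.mem_singleton_iff] at h
          exact hβF (h ▸ h3)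
    have h3 := Set.eq_of_subset_of_ncard_le hsub (by rw [h2, ← Nat.card_coe_set_eq, hcard])
    intro y hy
    rw [← h3] at hy
    simpa [or_assoc] using hy
  have hnF : ∀ y ∈ P.rootSet Ω, y ∉ Set.range (algebraMap F Ω) → y = α ∨ y = σ α := by
    intro y hy hyF
    rcases hall y hy with h | h | ⟨i, rfl⟩
    · exact Or.inl h
    · exact Or.inr h
    · exact absurd ((hρ i y₀).mpr hy₀F) hyF
  have hab : (⟨α, hα⟩ : P.rootSet Ω) ≠ ⟨σ α, hβ⟩ := by
    intro h
    exact hσ (Subtype.ext_iff.mp h).symm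
  apply grp_aux _ _ _ ⟨α, hα⟩ ⟨σ α, hβ⟩ hab
  · obtain ⟨g, hg, hgx⟩ := mem_range_aux P (σ.restrictScalars K)
    convert hg
    have hfix : ∀ x, x ≠ ⟨α, hα⟩ → x ≠ ⟨σ α, hβ⟩ → g x = x := by
      rintro ⟨x, hx⟩ h1 h2
      apply Subtype.ext
      rw [hgx]
      rcases hall x hx with h | h | ⟨i, rfl⟩
      · exact absurd (Subtype.ext h) h1
      · exact absurd (Subtype.ext h) h2
      · obtain ⟨z, hz⟩ := (hρ i y₀).mpr hy₀F
        simp [← hz]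
    have hgα : g ⟨α, hα⟩ = ⟨σ α, hβ⟩ := Subtype.ext (hgx _)
    ext1 x
    by_cases h1 : x = ⟨α, hα⟩
    · rw [h1, Equiv.swap_apply_left, hgα]
    by_cases h2 : x = ⟨σ α, hβ⟩
    · rw [h2, Equiv.swap_apply_right]
      by_contra h3
      have h5 : g ⟨σ α, hβ⟩ ≠ ⟨σ α, hβ⟩ := by
        intro h4
        rw [← hgα] at h4
        exact hab ((g.injective h4).symm.trans hgα)
      have h4 := hfix _ (Ne.symm h3) h5
      exact h5 (g.injective h4)
    · rw [hfix x h1 h2, Equiv.swap_apply_of_ne_of_ne h1 h2]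
  · rintro ⟨r, hr⟩ ⟨r', hr'⟩ h1 h2 h3 h4
    obtain ⟨i, rfl⟩ : ∃ i, ρ i y₀ = r := by
      rcases hall r hr with h | h | h
      · exact absurd (Subtype.ext h) h1
      · exact absurd (Subtype.ext h) h2
      · exact h
    obtain ⟨j, rfl⟩ : ∃ i, ρ i y₀ = r' := by
      rcases hall r' hr' with h | h | h
      · exact absurd (Subtype.ext h) h3
      · exact absurd (Subtype.ext h) h4
      · exact h
    obtain ⟨g, hg, hgx⟩ := mem_range_aux P ((ρ i).symm.trans (ρ j))
    refine ⟨g, hg, Subtype.ext ?_, ?_⟩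
    · rw [hgx]; simp
    · rcases hnF _ (g ⟨α, hα⟩).2 (by
        rw [hgx]
        simp only [AlgEquiv.trans_apply]
        rw [hρ j, ← hρ i]
        simpa using hαF) with h | h
      · exact Or.inl (Subtype.ext h)
      · exact Or.inr (Subtype.ext h)
  · refine ⟨fun x y => ?_⟩
    have := Gal.galAction_isPretransitive P Ω hirr
    obtain ⟨g, hg⟩ := MulAction.exists_smul_eq P.Gal x y
    exact ⟨⟨_, ⟨g, rfl⟩⟩, hg⟩
  · rw [hcard]
    exact (even_two).add_odd ht

theorem sep_aux {K : Type*} [Field K] [CharP K 2] (t : ℕ) (ht : Odd t) (T : K) :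
    (X ^ (2 + t) - C T * X ^ t + 1 : K[X]).Separable := by
  obtain ⟨m, rfl⟩ := ht
  have h2 : (2 : K[X]) = 0 := CharTwo.two_eq_zero
  refine ⟨1, X, ?_⟩
  simp only [derivative_add, derivative_sub, derivative_mul, derivative_X_pow, derivative_C,
    derivative_one, Nat.cast_add, Nat.cast_mul, Nat.cast_ofNat, Nat.cast_one, map_add, map_mul,
    map_ofNat, map_one, map_natCast]
  rw [show 2 + (2 * m + 1) - 1 = 2 * m + 2 by omega, show 2 * m + 1 - 1 = 2 * m by omega]
  linear_combination (X^(2*m+3) * (2 + m) - C T * X ^ (2 * m + 1) * (m + 1)) * h2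

theorem natDegree_aux {K : Type*} [Field K] (t : ℕ) (T : K) :
    (X ^ (2 + t) - C T * X ^ t + 1 : K[X]).natDegree = 2 + t := by
  compute_degree!

theorem monic_aux {K : Type*} [CommRing K] [Nontrivial K] (t : ℕ) (T : K) :
    (X ^ (2 + t) - C T * X ^ t + 1 : K[X]).Monic := by
  have : (X ^ (2 + t) - C T * X ^ t + 1 : K[X]) = X ^ (2 + t) + (- C T * X ^ t + 1) := by ring
  rw [this]
  apply monic_X_pow_add
  have : (- C T * X ^ t + 1 : K[X]).degree ≤ t := by
    compute_degree!
  refine lt_of_le_of_lt this ?_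
  exact_mod_cast (by omega : t < 2 + t)

theorem irr_aux {k K : Type*} [Field k] [Field K] [Algebra k[X] K] [IsFractionRing k[X] K]
    (t : ℕ) :
    Irreducible (X ^ (2 + t) - C (algebraMap k[X] K X) * X ^ t + 1 : K[X]) := by
  have hm := monic_aux t (X : k[X])
  have key := hm.irreducible_iff_irreducible_map_fraction_map (K := K)
  have e : (X ^ (2 + t) - C (algebraMap k[X] K X) * X ^ t + 1 : K[X]) =
    (X ^ (2 + t) - C X * X ^ t + 1 : k[X][X]).map (algebraMap k[X] K) := by simp
  rw [e, ← key, ← MulEquiv.irreducible_iff (Bivariate.swap (R := k))]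
  have e2 : Bivariate.swap (X ^ (2 + t) - C X * X ^ t + 1 : k[X][X]) =
    C (- X ^ t) * X + C (X ^ (2 + t) + 1) := by
    simp only [map_add, map_sub, map_mul, map_pow, map_one, Bivariate.swap_X, Bivariate.swap_Y,
      map_neg]
    ring
  rw [e2]
  apply irreducible_of_degree_eq_one_of_isRelPrime_coeff
  · apply degree_linear
    simp
  · apply IsCoprime.isRelPrime
    refine ⟨1, X ^ 2, ?_⟩
    rw [coeff_add, coeff_add, coeff_C_mul, coeff_C_mul, coeff_C_zero, coeff_C_succ,
      coeff_X_zero, coeff_X_one]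
    ring

theorem hensel_aux {k : Type*} [Field k] [CharP k 2] (t : ℕ) (ht : Odd t) :
    ∃ w : PowerSeries k, PowerSeries.constantCoeff w = 1 ∧
      w ^ (2 + t) - w ^ 2 + PowerSeries.X ^ (2 + t) = 0 := by
  let I : Ideal (PowerSeries k) := .span {PowerSeries.X}
  have hH : HenselianRing (PowerSeries k) I := inferInstance
  have hc : ∀ w : PowerSeries k, w ∈ I ↔ PowerSeries.constantCoeff w = 0 := by
    intro w
    rw [Ideal.mem_span_singleton, PowerSeries.X_dvd_iff]
  obtain ⟨a, ha, ha1⟩ := hH.is_henselian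
    (X ^ (2 + t) - X ^ 2 + C (PowerSeries.X ^ (2 + t)) : (PowerSeries k)[X]) (by
      have : (X ^ (2 + t) - X ^ 2 + C (PowerSeries.X ^ (2 + t)) : (PowerSeries k)[X]) =
        X ^ (2 + t) + (-X ^ 2 + C (PowerSeries.X ^ (2 + t))) := by ring
      rw [this]
      apply monic_X_pow_add
      have : (-X ^ 2 + C (PowerSeries.X ^ (2 + t)) : (PowerSeries k)[X]).degree ≤ 2 := by
        compute_degree
      refine lt_of_le_of_lt this ?_
      have := ht.pos
      exact_mod_cast (by omega : 2 < 2 + t)) 1 (by rw [hc]; simp) (by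
      apply IsUnit.map
      rw [PowerSeries.isUnit_iff_constantCoeff]
      obtain ⟨m, rfl⟩ := ht
      have h2 : (PowerSeries.constantCoeff (2 : PowerSeries k)) = 0 := by
        rw [map_ofNat]; exact CharTwo.two_eq_zero
      simp [derivative_X_pow, -map_pow, h2, CharTwo.add_self_eq_zero])
  refine ⟨a, ?_, ?_⟩
  · rw [hc] at ha1
    rw [map_sub, map_one] at ha1
    linear_combination ha1
  · simpa using ha

theorem order_pow_aux {k : Type*} [Field k] (y : LaurentSeries k) (hy : y ≠ 0) (m : ℕ) :
    (y ^ m).order = m * y.order := by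
  simp

theorem order_aux {k : Type*} [Field k] (t : ℕ) (ht : Odd t) (y : LaurentSeries k)
    (h : y ^ (2 + t) - HahnSeries.single (-(t : ℤ)) 1 * y ^ t + 1 = 0) : y.order = 1 := by
  have htpos := ht.pos
  have hy : y ≠ 0 := by
    rintro rfl
    have h1 : 2 + t ≠ 0 := by omega
    have h2 : t ≠ 0 := by omega
    simp [h1, h2] at h
  set T : LaurentSeries k := HahnSeries.single (-(t : ℤ)) 1 with hT
  have hT0 : T ≠ 0 := by simp [hT]
  have hTo : T.order = -(t : ℤ) := HahnSeries.order_single one_ne_zero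
  have hTt : T.orderTop = ((-(t : ℤ) : ℤ) : WithTop ℤ) := HahnSeries.orderTop_single one_ne_zero
  have h1 : y ^ t * (T - y ^ 2) = 1 := by linear_combination -h
  have hne : T - y ^ 2 ≠ 0 := by
    intro h0; simp [h0] at h1
  have h3 : (t : ℤ) * y.order + (T - y ^ 2).order = 0 := by
    have := congrArg HahnSeries.order h1
    rw [HahnSeries.order_mul (pow_ne_zero _ hy) hne, order_pow_aux y hy, HahnSeries.order_one]
      at this
    exact this
  have hy2 : (-y ^ 2).orderTop = ((2 * y.order : ℤ) : WithTop ℤ) := by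
    rw [HahnSeries.orderTop_neg, ← HahnSeries.order_eq_orderTop_of_ne_zero (pow_ne_zero _ hy),
      order_pow_aux y hy]
    rfl
  have hsub : (((T - y ^ 2).order : ℤ) : WithTop ℤ) = (T + - y ^ 2).orderTop := by
    rw [← sub_eq_add_neg, ← HahnSeries.order_eq_orderTop_of_ne_zero hne]
  rcases lt_trichotomy (2 * y.order) (-(t : ℤ)) with hlt | heq | hgt
  · rw [HahnSeries.orderTop_add_eq_right (by rw [hy2, hTt]; exact_mod_cast hlt), hy2] at hsub
    have hsub' : (T - y ^ 2).order = 2 * y.order := by exact_mod_cast hsub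
    rw [hsub'] at h3
    have : ((t : ℤ) + 2) * y.order = 0 := by linear_combination h3
    rcases mul_eq_zero.mp this with h | h <;> omega
  · obtain ⟨m, rfl⟩ := ht
    omega
  · rw [HahnSeries.orderTop_add_eq_left (by rw [hy2, hTt]; exact_mod_cast hgt), hTt] at hsub
    have hsub' : (T - y ^ 2).order = -(t : ℤ) := by exact_mod_cast hsub
    rw [hsub'] at h3
    have : (t : ℤ) * (y.order - 1) = 0 := by linear_combination h3
    rcases mul_eq_zero.mp this with h | h <;> omega

theorem transc_aux {k : Type*} [Field k] [IsAlgClosed k] (t : ℕ) (ht : 0 < t) :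
    Transcendental k (HahnSeries.single (-(t : ℤ)) 1 : LaurentSeries k) := by
  intro hal
  have h1 := IsAlgClosed.degree_eq_one_of_irreducible k (minpoly.irreducible hal.isIntegral)
  obtain ⟨c, hc⟩ := minpoly.mem_range_of_degree_eq_one _ _ h1
  have := congrArg HahnSeries.order hc
  rw [HahnSeries.order_single one_ne_zero] at this
  rw [HahnSeries.algebraMap_apply', PowerSeries.algebraMap_apply, HahnSeries.ofPowerSeries_C,
    HahnSeries.order_C] at this
  omega

/-- rescaling on Laurent series -/
theorem rot_aux {k : Type*} [Field k] (z : kˣ) :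
    ∃ e : LaurentSeries k ≃+* LaurentSeries k, ∀ p : PowerSeries k,
      e (algebraMap (PowerSeries k) (LaurentSeries k) p) =
        algebraMap (PowerSeries k) (LaurentSeries k) (PowerSeries.rescale (z : k) p) := by
  let r : PowerSeries k ≃+* PowerSeries k :=
    RingEquiv.ofRingHom (PowerSeries.rescale (z : k)) (PowerSeries.rescale ((z⁻¹ : kˣ) : k))
      (by rw [← PowerSeries.rescale_mul]; simp)
      (by rw [← PowerSeries.rescale_mul]; simp)
  refine ⟨IsFractionRing.ringEquivOfRingEquiv r, fun p => ?_⟩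
  rw [IsFractionRing.ringEquivOfRingEquiv_algebraMap]
  rfl

theorem order_prod_aux {k : Type*} [Field k] (m : Multiset (LaurentSeries k))
    (h : ∀ y ∈ m, y ≠ 0 ∧ y.order = 1) : m.prod ≠ 0 ∧ m.prod.order = m.card := by
  induction m using Multiset.induction_on with
  | empty => simp
  | cons a m ih =>
    obtain ⟨h1, h2⟩ := ih (fun y hy => h y (Multiset.mem_cons_of_mem hy))
    obtain ⟨h3, h4⟩ := h a (Multiset.mem_cons_self _ _)
    rw [Multiset.prod_cons]
    refine ⟨mul_ne_zero h3 h1, ?_⟩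
    rw [HahnSeries.order_mul h3 h1, h2, h4, Multiset.card_cons]
    push_cast
    ring

theorem card_gal_aux {K Ω : Type*} [Field K] [Field Ω] [Algebra K Ω] (P : K[X])
    [Fact ((P.map (algebraMap K Ω)).Splits)] (hsep : P.Separable) :
    (Gal.galActionHom P Ω).range = ⊤ ↔ Nat.card P.Gal = P.natDegree.factorial := by
  have hcard : Nat.card (P.rootSet Ω) = P.natDegree := by
    rw [Nat.card_eq_fintype_card]
    exact card_rootSet_eq_natDegree hsep (Fact.out)
  have h1 : Nat.card (Gal.galActionHom P Ω).range = Nat.card P.Gal :=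
    Nat.card_congr (MonoidHom.ofInjective (Gal.galActionHom_injective P Ω)).symm.toEquiv
  rw [← h1, ← hcard, ← Nat.card_perm]
  constructor
  · intro h
    rw [h, Subgroup.card_top]
  · exact Subgroup.eq_top_of_card_eq _

theorem div_aux {L : Type*} [Field L] (t : ℕ) (T u W : L) (hW0 : W ≠ 0) (hu : T * u ^ t = 1)
    (hWu : W ^ (2 + t) - W ^ 2 + u ^ (2 + t) = 0) :
    (u / W) ^ (2 + t) - T * (u / W) ^ t + 1 = 0 := by
  have h1 : T * (u / W) ^ t = 1 / W ^ t := by rw [div_pow, ← mul_div_assoc, hu]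
  have h2 : W ^ (2 + t) * (1 / W ^ t) = W ^ 2 := by
    rw [pow_add]; field_simp
  have h3 : W ^ (2 + t) * (u / W) ^ (2 + t) = u ^ (2 + t) := by
    rw [← mul_pow, mul_div_cancel₀ _ hW0]
  refine (mul_eq_zero.mp ?_).resolve_left (pow_ne_zero (2 + t) hW0)
  rw [h1]
  linear_combination h3 - h2 + hWu

theorem laurent_u_aux {k : Type*} [Field k] (t : ℕ) :
    (HahnSeries.single (-(t : ℤ)) 1 : LaurentSeries k) *
      (algebraMap (PowerSeries k) (LaurentSeries k) PowerSeries.X) ^ t = 1 := by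
  rw [HahnSeries.algebraMap_apply', Algebra.algebraMap_self, RingHom.id_apply,
    HahnSeries.ofPowerSeries_X, HahnSeries.single_pow, HahnSeries.single_mul_single]
  simp

theorem rot_aux2 {k : Type*} [Field k] (t : ℕ) (z : rootsOfUnity t k) :
    ∃ e : LaurentSeries k ≃+* LaurentSeries k, (∀ p : PowerSeries k,
      e (algebraMap (PowerSeries k) (LaurentSeries k) p) =
        algebraMap (PowerSeries k) (LaurentSeries k) (PowerSeries.rescale ((z : kˣ) : k) p)) ∧
      e (HahnSeries.single (-(t : ℤ)) 1) = HahnSeries.single (-(t : ℤ)) 1 ∧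
      ∀ c : k, e (algebraMap k (LaurentSeries k) c) = algebraMap k (LaurentSeries k) c := by
  obtain ⟨e, he⟩ := rot_aux (z : kˣ)
  have hzt : ((z : kˣ) : k) ^ t = 1 := by
    have h := z.2
    rw [mem_rootsOfUnity] at h
    have h2 := congrArg Units.val h
    rwa [Units.val_pow_eq_pow_val] at h2
  refine ⟨e, he, ?_, ?_⟩
  · have h1 := laurent_u_aux (k := k) t
    have h2 := congrArg e h1
    have h4 : e ((algebraMap (PowerSeries k) (LaurentSeries k) PowerSeries.X) ^ t) =
        (algebraMap (PowerSeries k) (LaurentSeries k) PowerSeries.X) ^ t := by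
      rw [← map_pow, he, map_pow (PowerSeries.rescale _), PowerSeries.rescale_X, mul_pow,
        ← map_pow PowerSeries.C, hzt]
      simp
    rw [map_mul e, h4, map_one e] at h2
    replace h2 := h2.trans h1.symm
    refine mul_right_cancel₀ ?_ h2
    intro h0
    rw [h0, mul_zero] at h1
    exact zero_ne_one h1
  · intro c
    change e (algebraMap (PowerSeries k) (LaurentSeries k) (algebraMap k (PowerSeries k) c)) =
          algebraMap (PowerSeries k) (LaurentSeries k) (algebraMap k (PowerSeries k) c)
    rw [he]
    congr 1
    ext n
    rw [PowerSeries.coeff_rescale, PowerSeries.algebraMap_apply, PowerSeries.coeff_C]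
    split_ifs with h
    · simp [h]
    · simp

set_option maxHeartbeats 1000000 in
theorem step1 {k K : Type*} [Field k] [IsAlgClosed k] [CharP k 2] [Field K] [Algebra k[X] K]
    [IsFractionRing k[X] K] (t : ℕ) (ht : Odd t) :
    Nat.card (X ^ (2 + t) - C (algebraMap k[X] K X) * X ^ t + 1 : K[X]).Gal =
      (2 + t).factorial := by
  have : CharP K 2 := by
    have : CharP k[X] 2 := inferInstance
    exact charP_of_injective_algebraMap (IsFractionRing.injective k[X] K) 2
  set P : K[X] := X ^ (2 + t) - C (algebraMap k[X] K X) * X ^ t + 1 with hP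
  have hsep : P.Separable := sep_aux t ht _
  have hirr : Irreducible P := irr_aux t
  have hdeg : P.natDegree = 2 + t := natDegree_aux t _
  have hmon : P.Monic := monic_aux t _
  have htpos := ht.pos
  let T : LaurentSeries k := HahnSeries.single (-(t : ℤ)) 1
  have htr : Function.Injective (aeval T : k[X] →ₐ[k] LaurentSeries k).toRingHom :=
    transcendental_iff_injective.mp (transc_aux t htpos)
  letI algKF : Algebra K (LaurentSeries k) := (IsFractionRing.lift htr).toAlgebra
  have algX : ∀ p : k[X], algebraMap K (LaurentSeries k) (algebraMap k[X] K p) = aeval T p :=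
    fun p => IsFractionRing.lift_algebraMap htr p
  have hPF : P.map (algebraMap K (LaurentSeries k)) = X ^ (2 + t) - C T * X ^ t + 1 := by
    simp [hP, algX]
  let Ω := AlgebraicClosure (LaurentSeries k)
  haveI : Fact ((P.map (algebraMap K Ω)).Splits) := ⟨IsAlgClosed.splits _⟩
  rw [← hdeg, ← card_gal_aux (Ω := Ω) P hsep]
  have hrot : ∀ z : rootsOfUnity t k, ∃ ρ : Ω ≃ₐ[K] Ω,
      (∀ y, ρ y ∈ Set.range (algebraMap (LaurentSeries k) Ω) ↔
        y ∈ Set.range (algebraMap (LaurentSeries k) Ω)) ∧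
      ∀ p : PowerSeries k, ρ (algebraMap (LaurentSeries k) Ω
        (algebraMap (PowerSeries k) (LaurentSeries k) p)) =
        algebraMap (LaurentSeries k) Ω (algebraMap (PowerSeries k) (LaurentSeries k)
          (PowerSeries.rescale ((z : kˣ) : k) p)) := by
    intro z
    obtain ⟨e, he, heT, heC⟩ := rot_aux2 t z
    have heK : (e : LaurentSeries k →+* LaurentSeries k).comp (algebraMap K (LaurentSeries k)) =
        algebraMap K (LaurentSeries k) := by
      apply IsLocalization.ringHom_ext (nonZeroDivisors k[X])
      apply Polynomial.ringHom_ext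
      · intro c
        simp only [RingHom.comp_apply, algX, aeval_C]
        exact heC c
      · simp only [RingHom.comp_apply, algX, aeval_X]
        exact heT
    let E : Ω ≃+* Ω := IsAlgClosure.equivOfEquiv Ω Ω e
    have hE : ∀ x, E (algebraMap (LaurentSeries k) Ω x) = algebraMap (LaurentSeries k) Ω (e x) :=
      fun x => IsAlgClosure.equivOfEquiv_algebraMap Ω Ω e x
    refine ⟨AlgEquiv.ofRingEquiv (f := E) (fun x => ?_), fun y => ?_, fun p => ?_⟩
    · rw [IsScalarTower.algebraMap_apply K (LaurentSeries k) Ω, hE]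
      exact congrArg _ (RingHom.congr_fun heK x)
    · change E y ∈ _ ↔ _
      constructor
      · rintro ⟨x, hx⟩
        refine ⟨e.symm x, ?_⟩
        apply E.injective
        rw [hE, ← hx]
        simp
      · rintro ⟨x, rfl⟩
        exact ⟨e x, (hE x).symm⟩
    · change E _ = _
      rw [hE, he]
  choose ρ hρ1 hρ2 using hrot
  obtain ⟨w, hw1, hw2⟩ := hensel_aux (k := k) t ht
  let u : LaurentSeries k := algebraMap (PowerSeries k) (LaurentSeries k) PowerSeries.X
  let W : LaurentSeries k := algebraMap (PowerSeries k) (LaurentSeries k) w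
  have hinjL : Function.Injective (algebraMap (PowerSeries k) (LaurentSeries k)) :=
    IsFractionRing.injective _ _
  have hw0 : w ≠ 0 := by rintro rfl; simp at hw1
  have hW0 : W ≠ 0 := by
    intro h; exact hw0 (hinjL (by rw [map_zero]; exact h))
  have hu : T * u ^ t = 1 := laurent_u_aux t
  have hWu : W ^ (2 + t) - W ^ 2 + u ^ (2 + t) = 0 := by
    have := congrArg (algebraMap (PowerSeries k) (LaurentSeries k)) hw2
    rwa [map_add, map_sub, map_pow, map_pow, map_pow, map_zero] at this
  have hy : (u / W) ^ (2 + t) - T * (u / W) ^ t + 1 = 0 := by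
    exact div_aux t _ _ _ hW0 hu hWu
  have hroot : ∀ y : LaurentSeries k, y ^ (2 + t) - T * y ^ t + 1 = 0 →
      algebraMap (LaurentSeries k) Ω y ∈ P.rootSet Ω := by
    intro y hy
    rw [mem_rootSet]
    refine ⟨hirr.ne_zero, ?_⟩
    rw [aeval_algebraMap_apply, ← eval_map_algebraMap, hPF]
    simp [hy]
  have hne : NeZero (t : k) := ⟨by
    obtain ⟨m, rfl⟩ := ht
    have h2 : (2 : k) = 0 := CharTwo.two_eq_zero
    simp [h2]⟩
  have hne' : NeZero t := ⟨htpos.ne'⟩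
  refine field_aux (F := LaurentSeries k) t ht P hirr hsep hdeg ?_ (ι := rootsOfUnity t k) ?_ ρ hρ1
    (algebraMap (LaurentSeries k) Ω (u / W)) (hroot _ hy) ⟨_, rfl⟩ ?_
  · by_contra! hall
    have hsp : (P.map (algebraMap K (LaurentSeries k))).Splits := by
      apply Splits.of_splits_map (algebraMap (LaurentSeries k) Ω) (IsAlgClosed.splits _)
      intro a ha
      rw [map_map, ← IsScalarTower.algebraMap_eq] at ha
      have : a ∈ P.rootSet Ω := by
        rw [mem_rootSet]
        refine ⟨hirr.ne_zero, ?_⟩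
        rw [← eval_map_algebraMap]
        exact (mem_roots'.mp ha).2
      exact hall a this
    have hmon' := hmon.map (algebraMap K (LaurentSeries k))
    have h0 := hsp.coeff_zero_eq_prod_roots_of_monic hmon'
    obtain ⟨h1, h2⟩ := order_prod_aux (P.map (algebraMap K (LaurentSeries k))).roots (by
      intro y hy
      have := (mem_roots'.mp hy).2
      rw [hPF, IsRoot.def] at this
      simp only [eval_add, eval_sub, eval_mul, eval_pow, eval_X, eval_C, eval_one] at this
      have ho := order_aux t ht y this
      refine ⟨?_, ho⟩
      rintro rfl
      simp at ho)
    rw [← hsp.natDegree_eq_card_roots, hmon.natDegree_map, hdeg] at h2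
    have h3 : (P.map (algebraMap K (LaurentSeries k))).coeff 0 = 1 := by
      rw [hPF]
      simp [coeff_zero_eq_eval_zero, htpos.ne']
    rw [h3] at h0
    have h4 := congrArg HahnSeries.order h0
    have h5 : ((-1 : LaurentSeries k) ^ (P.map (algebraMap K (LaurentSeries k))).natDegree).order
        = 0 := by
      rw [order_pow_aux _ (by simp), HahnSeries.order_neg, HahnSeries.order_one, mul_zero]
    rw [HahnSeries.order_mul (by simp) h1, h5, h2, HahnSeries.order_one] at h4
    push_cast at h4
    omega
  · exact HasEnoughRootsOfUnity.natCard_rootsOfUnity k t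
  · intro z z' hzz
    have key : ∀ z, ρ z (algebraMap (LaurentSeries k) Ω (u / W)) =
      algebraMap (LaurentSeries k) Ω (algebraMap (PowerSeries k) (LaurentSeries k)
          (PowerSeries.rescale ((z : kˣ) : k) PowerSeries.X)) / 
       algebraMap (LaurentSeries k) Ω (algebraMap (PowerSeries k) (LaurentSeries k)
          (PowerSeries.rescale ((z : kˣ) : k) w)) := by
      intro z
      rw [map_div₀, map_div₀, hρ2, hρ2]
    have hcc : ∀ z : rootsOfUnity t k, PowerSeries.constantCoeff
        (PowerSeries.rescale ((z : kˣ) : k) w) = 1 := by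
      intro z
      rw [← hw1, ← PowerSeries.coeff_zero_eq_constantCoeff_apply, PowerSeries.coeff_rescale]
      simp
    have hne0 : ∀ z : rootsOfUnity t k, algebraMap (LaurentSeries k) Ω
        (algebraMap (PowerSeries k) (LaurentSeries k)
          (PowerSeries.rescale ((z : kˣ) : k) w)) ≠ 0 := by
      intro z h
      have h1 := (map_eq_zero (algebraMap (LaurentSeries k) Ω)).mp h
      have h2 : PowerSeries.rescale ((z : kˣ) : k) w = 0 := hinjL (by rw [h1, map_zero])
      have h3 := hcc z
      rw [h2] at h3
      simp at h3
    simp only [key] at hzz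
    rw [div_eq_div_iff (hne0 _) (hne0 _), ← map_mul, ← map_mul, ← map_mul, ← map_mul] at hzz
    have h1 := hinjL ((algebraMap (LaurentSeries k) Ω).injective hzz)
    rw [PowerSeries.rescale_X, PowerSeries.rescale_X] at h1
    have h2 : PowerSeries.X * (PowerSeries.C ((z : kˣ) : k) * PowerSeries.rescale ((z' : kˣ) : k) w)
      = PowerSeries.X * (PowerSeries.C ((z' : kˣ) : k) * PowerSeries.rescale ((z : kˣ) : k) w) := by
      linear_combination h1
    have h3 := congrArg PowerSeries.constantCoeff (mul_left_cancel₀ PowerSeries.X_ne_zero h2)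
    rw [map_mul, map_mul, hcc, hcc] at h3
    simp at h3
    exact Subtype.ext (Units.ext h3)

theorem root_unity_aux {k Ω : Type*} [Field k] [IsAlgClosed k] [Field Ω] (ψ : k →+* Ω) (s : ℕ)
    (hs : 0 < s) (z : Ω) (hz : z ^ s = 1) : ∃ c, ψ c = z := by
  let _ : Algebra k Ω := ψ.toAlgebra
  have hint : IsIntegral k z := ⟨X ^ s - 1, monic_X_pow_sub_C 1 hs.ne', by simp [hz]⟩
  have h1 := IsAlgClosed.degree_eq_one_of_irreducible k (minpoly.irreducible hint)
  exact minpoly.mem_range_of_degree_eq_one _ _ h1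

theorem step2 {k K₁ K : Type*} [Field k] [IsAlgClosed k] [CharP k 2] [Field K₁] [Algebra k[X] K₁]
    [IsFractionRing k[X] K₁] [Field K] [Algebra k[X] K] [IsFractionRing k[X] K]
    (t : ℕ) (ht : Odd t) (a : k) (ha : a ≠ 0) (s : ℕ) (hs : 0 < s) :
    Nat.card (X ^ (2 + t) - C (algebraMap k[X] K (C a * X ^ s)) * X ^ t + 1 : K[X]).Gal =
      (2 + t).factorial := by
  have hinj : Function.Injective (algebraMap k[X] K) := IsFractionRing.injective _ _
  have hinj1 : Function.Injective (algebraMap k[X] K₁) := IsFractionRing.injective _ _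
  have hchar : CharP K 2 := charP_of_injective_algebraMap hinj 2
  have hchar1 : CharP K₁ 2 := charP_of_injective_algebraMap hinj1 2
  set P : K[X] := X ^ (2 + t) - C (algebraMap k[X] K (C a * X ^ s)) * X ^ t + 1 with hP
  have hsep : P.Separable := sep_aux t ht _
  have hdeg : P.natDegree = 2 + t := natDegree_aux t _
  set P₁ : K₁[X] := X ^ (2 + t) - C (algebraMap k[X] K₁ X) * X ^ t + 1 with hP₁
  have hsep₁ : P₁.Separable := sep_aux t ht _
  have hdeg₁ : P₁.natDegree = 2 + t := natDegree_aux t _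
  have hφ : Function.Injective
      ((algebraMap k[X] K).comp (compRingHom (C a * X ^ s : k[X]))) := by
    rw [RingHom.coe_comp]
    refine hinj.comp ?_
    rw [injective_iff_map_eq_zero]
    intro p hp
    rw [coe_compRingHom_apply, comp_eq_zero_iff] at hp
    rcases hp with h | ⟨-, h⟩
    · exact h
    · have := congrArg natDegree h
      rw [natDegree_C_mul_X_pow _ _ ha, natDegree_C] at this
      omega
  let _ : Algebra K₁ K := (IsFractionRing.lift hφ).toAlgebra
  have alg : ∀ p : k[X], algebraMap K₁ K (algebraMap k[X] K₁ p) =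
      algebraMap k[X] K (p.comp (C a * X ^ s)) :=
    fun p => IsFractionRing.lift_algebraMap hφ p
  have hmap : P₁.map (algebraMap K₁ K) = P := by
    simp [hP, hP₁, alg]
  -- algebraicity
  have halgX : IsAlgebraic K₁ (algebraMap k[X] K X) := by
    refine IsAlgebraic.of_pow hs ?_
    have : (algebraMap k[X] K X) ^ s = algebraMap K₁ K (algebraMap k[X] K₁ (C a⁻¹ * X)) := by
      rw [alg, ← map_pow]
      congr 1
      simp only [mul_comp, C_comp, X_comp]
      rw [← mul_assoc, ← C_mul, inv_mul_cancel₀ ha, C_1, one_mul]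
    rw [this]
    exact isAlgebraic_algebraMap _
  have halgp : ∀ p : k[X], IsAlgebraic K₁ (algebraMap k[X] K p) := by
    intro p
    induction p using Polynomial.induction_on' with
    | add p q hp hq => rw [map_add]; exact hp.add hq
    | monomial n c =>
      rw [← C_mul_X_pow_eq_monomial, map_mul, map_pow]
      refine IsAlgebraic.mul ?_ (halgX.pow n)
      have : algebraMap k[X] K (C c) = algebraMap K₁ K (algebraMap k[X] K₁ (C c)) := by
        rw [alg, C_comp]
      rw [this]
      exact isAlgebraic_algebraMap _
  have halg : Algebra.IsAlgebraic K₁ K := ⟨fun x => by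
    obtain ⟨p, q, -, rfl⟩ := IsFractionRing.div_surjective (A := k[X]) x
    rw [div_eq_mul_inv]
    exact (halgp p).mul (halgp q).inv⟩
  let Ω := AlgebraicClosure K
  have halgΩ : Algebra.IsAlgebraic K₁ Ω := Algebra.IsAlgebraic.trans K₁ K Ω
  have hcl : IsAlgClosure K₁ Ω := ⟨inferInstance, halgΩ⟩
  have hnor : Normal K₁ Ω := IsAlgClosure.normal K₁ Ω
  have hcharΩ : CharP Ω 2 := charP_of_injective_algebraMap (algebraMap K Ω).injective 2
  have hS : Fact ((P.map (algebraMap K Ω)).Splits) := ⟨IsAlgClosed.splits _⟩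
  have hS₁ : Fact ((P₁.map (algebraMap K₁ Ω)).Splits) := ⟨IsAlgClosed.splits _⟩
  have hmain := step1 (k := k) (K := K₁) t ht
  rw [← hP₁, ← hdeg₁, ← card_gal_aux (Ω := Ω) P₁ hsep₁] at hmain
  rw [← hdeg, ← card_gal_aux (Ω := Ω) P hsep]
  have hroots : P₁.rootSet Ω = P.rootSet Ω := by
    ext y
    rw [mem_rootSet, mem_rootSet, ← hmap, aeval_map_algebraMap]
    simp [hsep₁.ne_zero, Polynomial.map_eq_zero]
  rw [eq_top_iff, ← Equiv.Perm.closure_isSwap, Subgroup.closure_le]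
  rintro π ⟨x, y, hxy, rfl⟩
  obtain ⟨σ, hσ⟩ : ∃ σ : Ω ≃ₐ[K₁] Ω, ∀ r : P.rootSet Ω, σ r = (Equiv.swap x y r : P.rootSet Ω) := by
    let e : P₁.rootSet Ω ≃ P.rootSet Ω := Equiv.setCongr hroots
    let π' : Equiv.Perm (P₁.rootSet Ω) := (e.trans (Equiv.swap x y)).trans e.symm
    have : π' ∈ (Gal.galActionHom P₁ Ω).range := by rw [hmain]; trivial
    obtain ⟨g, hg⟩ := this
    obtain ⟨σ, rfl⟩ := Gal.restrict_surjective P₁ Ω g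
    refine ⟨σ, fun r => ?_⟩
    have h1 := Gal.galActionHom_restrict P₁ Ω σ (e.symm r)
    rw [hg] at h1
    have h2 : ((e.symm r : P₁.rootSet Ω) : Ω) = r := rfl
    rw [← h2, ← h1]
    simp only [π', Equiv.trans_apply, Equiv.apply_symm_apply]
    rfl
  have hσ2 : ∀ r : P.rootSet Ω, σ (σ r) = r := by
    intro r
    rw [hσ, hσ]; simp
  have hσodd : ∀ m : ℕ, ∀ r : P.rootSet Ω, (σ ^ (2 * m + 1)) (r : Ω) = σ r := by
    intro m r
    induction m with
    | zero => simp
    | succ m ih =>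
      rw [show 2 * (m + 1) + 1 = 2 + (2 * m + 1) by ring, pow_add, AlgEquiv.mul_apply, ih, pow_two,
        AlgEquiv.mul_apply, hσ2]
  -- action on X
  let x₀ : Ω := algebraMap K Ω (algebraMap k[X] K X)
  have hx₀ : x₀ ≠ 0 := by
    intro h
    have h1 := (map_eq_zero (algebraMap K Ω)).mp h
    exact X_ne_zero (hinj (by rw [h1, map_zero]))
  have hfixk : ∀ (τ : Ω ≃ₐ[K₁] Ω) (c : k), τ (algebraMap K Ω (algebraMap k[X] K (C c))) =
      algebraMap K Ω (algebraMap k[X] K (C c)) := by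
    intro τ c
    have : algebraMap k[X] K (C c) = algebraMap K₁ K (algebraMap k[X] K₁ (C c)) := by
      rw [alg, C_comp]
    rw [this, ← IsScalarTower.algebraMap_apply K₁ K Ω, AlgEquiv.commutes]
  have hxs : x₀ ^ s = algebraMap K₁ Ω (algebraMap k[X] K₁ (C a⁻¹ * X)) := by
    rw [IsScalarTower.algebraMap_apply K₁ K Ω, alg, ← map_pow, ← map_pow]
    congr 2
    simp only [mul_comp, C_comp, X_comp]
    rw [← mul_assoc, ← C_mul, inv_mul_cancel₀ ha, C_1, one_mul]
  have hz : (σ x₀ / x₀) ^ s = 1 := by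
    rw [div_pow, ← map_pow, hxs, AlgEquiv.commutes, div_self]
    rw [← hxs]
    exact pow_ne_zero _ hx₀
  obtain ⟨c, hc⟩ := root_unity_aux
    ((algebraMap K Ω).comp ((algebraMap k[X] K).comp C)) s hs _ hz
  obtain ⟨e, s', hs'odd, hss⟩ := Nat.exists_eq_two_pow_mul_odd hs.ne'
  have hz' : (σ x₀ / x₀) ^ s' = 1 := by
    rw [hss] at hz
    exact (ExpChar.pow_prime_pow_mul_eq_one_iff 2 e s' _).mp hz
  have hσx : σ x₀ = (σ x₀ / x₀) * x₀ := (div_mul_cancel₀ _ hx₀).symm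
  set z := σ x₀ / x₀ with hzdef
  have hσz : σ z = z := by
    rw [← hc]
    exact hfixk σ c
  have hpow : ∀ m : ℕ, (σ ^ m) x₀ = z ^ m * x₀ := by
    intro m
    induction m with
    | zero => simp
    | succ m ih =>
      rw [pow_succ', AlgEquiv.mul_apply, ih, map_mul, map_pow, hσz, hσx]
      ring
  have hτx : (σ ^ s') x₀ = x₀ := by rw [hpow, hz', one_mul]
  have hτK : (((σ ^ s' : Ω ≃ₐ[K₁] Ω) : Ω ≃+* Ω) : Ω →+* Ω).comp (algebraMap K Ω) =
      algebraMap K Ω := by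
    apply IsLocalization.ringHom_ext (nonZeroDivisors k[X])
    apply Polynomial.ringHom_ext
    · intro c
      exact hfixk _ c
    · exact hτx
  let τ : Ω ≃ₐ[K] Ω := AlgEquiv.ofRingEquiv (f := ((σ ^ s' : Ω ≃ₐ[K₁] Ω) : Ω ≃+* Ω))
    (fun x => RingHom.congr_fun hτK x)
  obtain ⟨g, hg, hgx⟩ := mem_range_aux P τ
  have : g = Equiv.swap x y := by
    ext1 r
    apply Subtype.ext
    rw [hgx]
    obtain ⟨m, rfl⟩ := hs'odd
    change (σ ^ (2 * m + 1)) (r : Ω) = _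
    rw [hσodd, hσ]
  rw [← this]
  exact hg

/-- Abhyankar: over an algebraically closed field `k` of characteristic `2`,
with `t` odd and `n = 2 + t`, the polynomial `Y^n - a·X^s·Y^t + 1` over `k(X)`
has `n` distinct roots in its splitting field, and the image of its Galois
group in the permutation group of the set of roots is the full symmetric
group on those roots. -/
theorem stmt_5 (k : Type*) [Field k] [IsAlgClosed k] [CharP k 2]
    (t : ℕ) (ht : 0 < t) (htodd : Odd t)
    (n : ℕ) (hn : n = 2 + t)
    (a : k) (ha : a ≠ 0) (s : ℕ) (hs : 0 < s)
    (f : Polynomial (RatFunc k))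
    (hf : f = X ^ n - C (algebraMap k (RatFunc k) a * RatFunc.X ^ s) * X ^ t + 1) :
    haveI : Fact ((f.map (algebraMap (RatFunc k) f.SplittingField)).Splits) :=
      ⟨SplittingField.splits f⟩
    Fintype.card (f.rootSet f.SplittingField) = n ∧
      (Polynomial.Gal.galActionHom f f.SplittingField).range = ⊤ := by
  subst hn
  have hf' : f = X ^ (2 + t) - C (algebraMap k[X] (RatFunc k) (C a * X ^ s)) * X ^ t + 1 := by
    have hT : algebraMap k[X] (RatFunc k) (C a * X ^ s) =
        algebraMap k (RatFunc k) a * RatFunc.X ^ s := by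
      rw [map_mul, map_pow, RatFunc.algebraMap_X, RatFunc.algebraMap_C]
      rfl
    rw [hf, hT]
  have hchar : CharP (RatFunc k) 2 :=
    charP_of_injective_algebraMap (IsFractionRing.injective k[X] (RatFunc k)) 2
  have hsep : f.Separable := by rw [hf]; exact sep_aux t htodd _
  have hdeg : f.natDegree = 2 + t := by rw [hf]; exact natDegree_aux t _
  have hcard := step2 (K₁ := FractionRing k[X]) (K := RatFunc k) t htodd a ha s hs
  rw [← hf', ← hdeg] at hcard
  have hS : Fact ((f.map (algebraMap (RatFunc k) f.SplittingField)).Splits) :=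
    ⟨SplittingField.splits f⟩
  refine ⟨?_, (card_gal_aux f hsep).mpr hcard⟩
  rw [← hdeg]
  convert card_rootSet_eq_natDegree hsep (SplittingField.splits f)
end
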